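/- Let Δ ≥ 7 be an integer. Every finite simple graph G with maximum average degree Mad(G) < 3 and maximum degree at most Δ satisfies χ'_s(G) ≤ 3Δ. -/

import Mathlib

open scoped Classical

namespace StrongEC

/-- Two edges of `G` conflict for strong edge-coloring: they are distinct and either share
an endpoint or are both adjacent to a common edge of `G`. -/
def Conflict {V : Type*} (G : SimpleGraph V) (e e' : Sym2 V) : Prop :=
  e ≠ e' ∧ ((∃ v, v ∈ e ∧ v ∈ e') ∨
    ∃ f ∈ G.edgeSet, (∃ v, v ∈ e ∧ v ∈ f) ∧ (∃ w, w ∈ e' ∧ w ∈ f))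

/-- `C` is a strong edge-coloring of `G` with `k` colors. -/
def IsStrongColoring {V : Type*} (G : SimpleGraph V) {k : ℕ} (C : Sym2 V → Fin k) : Prop :=
  ∀ e ∈ G.edgeSet, ∀ e' ∈ G.edgeSet, Conflict G e e' → C e ≠ C e'

/-- `G` admits a strong `k`-edge-coloring. -/
def HasStrongColoring {V : Type*} (G : SimpleGraph V) (k : ℕ) : Prop :=
  ∃ C : Sym2 V → Fin k, IsStrongColoring G C

/-- The strong chromatic index of `G`: the least `k` such that `G` admits a strong
`k`-edge-coloring. -/
noncomputable def strongChromaticIndex {V : Type*} (G : SimpleGraph V) : ℕ :=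
  sInf {k | HasStrongColoring G k}

/-- The maximum average degree of a finite graph `G`: the supremum over nonempty vertex
subsets `A` of `2 * e(A) / |A|`, where `e(A)` is the number of edges of `G` inside `A`
(this equals the maximum of `2|E(H)|/|V(H)|` over all subgraphs `H` with at least one
vertex). -/
noncomputable def mad {V : Type*} (G : SimpleGraph V) : ℝ :=
  sSup {x : ℝ | ∃ A : Finset V, A.Nonempty ∧
    x = 2 * ({e ∈ G.edgeSet | ∀ v ∈ e, v ∈ A}.ncard : ℝ) / (A.card : ℝ)}

section Helpers
set_option linter.unusedSectionVars false
variable {V : Type*} [Fintype V] {N : ℕ} {H : SimpleGraph V}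

/-- The labelling conditions for all vertices outside `D`. -/
structure LabOff (N : ℕ) (H : SimpleGraph V) (D : Finset V) (C : V → Finset (Fin (3 * N))) :
    Prop where
  card : ∀ v, (C v).card = N
  ex : ∀ x y, x ∉ D → y ∉ D → H.Adj x y → ∃ c, c ∈ C x ∧ c ∈ C y
  uniq : ∀ x y, x ∉ D → y ∉ D → H.Adj x y → ∀ c c', c ∈ C x → c ∈ C y → c' ∈ C x → c' ∈ C y →
    c = c'
  ind : ∀ v x y, v ∉ D → x ∉ D → y ∉ D → H.Adj v x → H.Adj v y → x ≠ y →
    ∀ c, c ∈ C v → c ∈ C x → c ∉ C y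

/-- Neighbours outside `D`. -/
noncomputable def nb (H : SimpleGraph V) (D : Finset V) (x : V) : Finset V :=
  Finset.univ.filter (fun s => H.Adj x s ∧ s ∉ D)

/-- degree -/
noncomputable def dg (H : SimpleGraph V) (x : V) : ℕ := (nb H ∅ x).card

/-- number of 2-neighbours -/
noncomputable def bb (H : SimpleGraph V) (x : V) : ℕ :=
  ((nb H ∅ x).filter (fun s => dg H s = 2)).card

/-- 3-vertex with exactly one 2-neighbour -/
def Tiny2 (H : SimpleGraph V) (x : V) : Prop := dg H x = 3 ∧ bb H x = 1

/-- 2-vertices and tiny2 vertices -/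
def Light (H : SimpleGraph V) (x : V) : Prop := dg H x = 2 ∨ Tiny2 H x

/-- `c` is a colour of `v` used by no edge at `v` outside `D` -/
def Free (H : SimpleGraph V) (D : Finset V) (C : V → Finset (Fin (3 * N))) (v : V)
    (c : Fin (3 * N)) : Prop := c ∈ C v ∧ ∀ s, H.Adj v s → s ∉ D → c ∉ C s

/-- `c` is a colour used by an edge at `v` outside `D` -/
def Ban (H : SimpleGraph V) (D : Finset V) (C : V → Finset (Fin (3 * N))) (v : V)
    (c : Fin (3 * N)) : Prop := c ∈ C v ∧ ∃ s, H.Adj v s ∧ s ∉ D ∧ c ∈ C s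

/-- Slots outside `D` are preserved. -/
def SP (H : SimpleGraph V) (D : Finset V) (C C' : V → Finset (Fin (3 * N))) : Prop :=
  ∀ x y, x ∉ D → y ∉ D → H.Adj x y → ∀ c, (c ∈ C x ∧ c ∈ C y) ↔ (c ∈ C' x ∧ c ∈ C' y)

lemma mem_nb {D : Finset V} {x s : V} : s ∈ nb H D x ↔ H.Adj x s ∧ s ∉ D := by
  simp [nb]

lemma SP.refl {D : Finset V} (C : V → Finset (Fin (3 * N))) : SP H D C C :=
  fun _ _ _ _ _ _ => Iff.rfl

lemma SP.trans {D : Finset V} {C C' C'' : V → Finset (Fin (3 * N))} (h : SP H D C C')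
    (h' : SP H D C' C'') : SP H D C C'' :=
  fun x y hx hy ha c => (h x y hx hy ha c).trans (h' x y hx hy ha c)

lemma SP.mono {D D' : Finset V} {C C' : V → Finset (Fin (3 * N))} (h : SP H D C C')
    (hD : D ⊆ D') : SP H D' C C' :=
  fun x y hx hy ha c => h x y (fun h => hx (hD h)) (fun h => hy (hD h)) ha c

lemma LabOff.mono {D D' : Finset V} {C : V → Finset (Fin (3 * N))} (h : LabOff N H D C)
    (hD : D ⊆ D') : LabOff N H D' C where
  card := h.card
  ex := fun x y hx hy => h.ex x y (fun h => hx (hD h)) (fun h => hy (hD h))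
  uniq := fun x y hx hy => h.uniq x y (fun h => hx (hD h)) (fun h => hy (hD h))
  ind := fun v x y hv hx hy => h.ind v x y (fun h => hv (hD h)) (fun h => hx (hD h))
    (fun h => hy (hD h))

lemma LabOff.of_SP {D : Finset V} {C C' : V → Finset (Fin (3 * N))} (h : LabOff N H D C)
    (hc : ∀ v, (C' v).card = N) (hs : SP H D C C') : LabOff N H D C' where
  card := hc
  ex := fun x y hx hy ha => by
    obtain ⟨c, h1, h2⟩ := h.ex x y hx hy ha
    exact ⟨c, (hs x y hx hy ha c).1 ⟨h1, h2⟩⟩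
  uniq := fun x y hx hy ha c c' h1 h2 h3 h4 => by
    have a1 := (hs x y hx hy ha c).2 ⟨h1, h2⟩
    have a2 := (hs x y hx hy ha c').2 ⟨h3, h4⟩
    exact h.uniq x y hx hy ha c c' a1.1 a1.2 a2.1 a2.2
  ind := fun v x y hv hx hy a1 a2 hne c h1 h2 h3 => by
    have b1 := (hs v x hv hx a1 c).2 ⟨h1, h2⟩
    have b2 := (hs v y hv hy a2 c).2 ⟨h1, h3⟩
    exact h.ind v x y hv hx hy a1 a2 hne c b1.1 b1.2 b2.2

/-- Exchange a free colour. -/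
lemma EX {D : Finset V} {C : V → Finset (Fin (3 * N))} (h : LabOff N H D C) {u : V}
    {g p : Fin (3 * N)} (hu : u ∉ D) (hg : Free H D C u g) (hp : p ∉ C u)
    (hps : ∀ s, H.Adj u s → s ∉ D → p ∉ C s) :
    ∃ C', LabOff N H D C' ∧ SP H D C C' ∧ C' u = insert p ((C u).erase g) ∧
      ∀ y, y ≠ u → C' y = C y := by
  have hs : SP H D C (Function.update C u (insert p ((C u).erase g))) := by
    intro x y hx hy ha c
    have hne := ha.ne
    have hg1 := hg.1
    have hg2 := hg.2
    have := ha.symm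
    by_cases h1 : x = u
    · subst h1
      rw [Function.update_self, Function.update_of_ne (Ne.symm hne)]
      grind
    · by_cases h2 : y = u
      · subst h2
        rw [Function.update_self, Function.update_of_ne hne]
        grind
      · rw [Function.update_of_ne h1, Function.update_of_ne h2]
  refine ⟨_, h.of_SP ?_ hs, hs, by simp, fun y hy => by simp [hy]⟩
  intro v
  by_cases hv : v = u
  · subst hv
    rw [Function.update_self, Finset.card_insert_of_notMem (by simp [hp]),
      Finset.card_erase_of_mem hg.1, h.card]
    have : 0 < (C v).card := Finset.card_pos.2 ⟨g, hg.1⟩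
    rw [h.card] at this
    omega
  · rw [Function.update_of_ne hv, h.card]

/-- Set the label of a vertex. -/
lemma SET {D : Finset V} {C : V → Finset (Fin (3 * N))} {u : V} (h : LabOff N H (insert u D) C)
    {K : Finset (Fin (3 * N))} (hK : K.card = N)
    (h1 : ∀ x, H.Adj u x → x ∉ D → ∃ c, c ∈ K ∧ c ∈ C x)
    (h2 : ∀ x, H.Adj u x → x ∉ D → ∀ c c', c ∈ K → c ∈ C x → c' ∈ K → c' ∈ C x → c = c')
    (h3 : ∀ x y, H.Adj u x → H.Adj u y → x ∉ D → y ∉ D → x ≠ y → ∀ c, c ∈ K → c ∈ C x → c ∉ C y)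
    (h4 : ∀ x y, H.Adj u x → H.Adj x y → x ∉ D → y ∉ D → y ≠ u → ∀ c, c ∈ K → c ∈ C x →
      c ∉ C y) :
    LabOff N H D (Function.update C u K) := by
  have hm : ∀ x, x ∉ D → x ≠ u → x ∉ insert u D := by
    intro x hx hxu; simp [hx, hxu]
  constructor
  · intro v
    by_cases hv : v = u
    · subst hv; simpa using hK
    · simpa [hv] using h.card v
  · intro x y hx hy ha
    have hne := ha.ne
    by_cases hxu : x = u
    · subst hxu
      simpa [Ne.symm hne] using h1 y ha hy
    · by_cases hyu : y = u
      · subst hyu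
        obtain ⟨c, p, q⟩ := h1 x ha.symm hx
        exact ⟨c, by simpa [hxu] using q, by simpa using p⟩
      · simpa [hxu, hyu] using h.ex x y (hm x hx hxu) (hm y hy hyu) ha
  · intro x y hx hy ha c c'
    have hne := ha.ne
    by_cases hxu : x = u
    · subst hxu
      simpa [Ne.symm hne] using h2 y ha hy c c'
    · by_cases hyu : y = u
      · subst hyu
        simp only [Function.update_self, Function.update_of_ne hxu]
        intro a b a' b'
        exact h2 x ha.symm hx c c' b a b' a'
      · simpa [hxu, hyu] using h.uniq x y (hm x hx hxu) (hm y hy hyu) ha c c'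
  · intro v x y hv hx hy avx avy hxy c
    by_cases hvu : v = u
    · subst hvu
      have := avx.ne
      have := avy.ne
      simp only [Function.update_self, Function.update_of_ne avx.ne.symm,
        Function.update_of_ne avy.ne.symm]
      exact h3 x y avx avy hx hy hxy c
    · by_cases hxu : x = u
      · subst hxu
        simp only [Function.update_self, Function.update_of_ne hvu,
          Function.update_of_ne hxy.symm]
        intro a b
        exact h4 v y avx.symm avy hv hy hxy.symm c b a
      · by_cases hyu : y = u
        · subst hyu
          simp only [Function.update_self, Function.update_of_ne hvu,
            Function.update_of_ne hxy]
          intro a b b'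
          exact h4 v x avy.symm avx hv hx hxy c b' a b
        · simpa [hxu, hyu, hvu] using h.ind v x y (hm v hv hvu) (hm x hx hxu) (hm y hy hyu)
            avx avy hxy c

/-! Counting lemmas -/

lemma exists_notMem (F : Finset (Fin (3 * N))) (h : F.card < 3 * N) : ∃ p, p ∉ F := by
  by_contra hh
  push Not at hh
  have : F = Finset.univ := by ext; simp [hh]
  rw [this] at h
  simp at h

lemma LabOff.inter_card {D : Finset V} {C : V → Finset (Fin (3 * N))} (h : LabOff N H D C)
    {x y : V} (hx : x ∉ D) (hy : y ∉ D) (ha : H.Adj x y) : (C x ∩ C y).card = 1 := by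
  obtain ⟨c, h1, h2⟩ := h.ex x y hx hy ha
  rw [Finset.card_eq_one]
  refine ⟨c, ?_⟩
  ext c'
  simp only [Finset.mem_inter, Finset.mem_singleton]
  constructor
  · rintro ⟨h3, h4⟩; exact h.uniq x y hx hy ha _ _ h3 h4 h1 h2
  · rintro rfl; exact ⟨h1, h2⟩

lemma card_compl_union {A B : Finset (Fin (3 * N))} (hA : A.card = N) (hB : B.card = N) :
    N + (A ∩ B).card = ((A ∪ B)ᶜ).card := by
  rw [Finset.card_compl, Fintype.card_fin]
  have := Finset.card_union_add_card_inter A B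
  have := Finset.card_le_univ (A ∪ B)
  simp at this
  omega

/-- at least `N - n` free colours, avoiding a given set -/
lemma exists_free {D : Finset V} {C : V → Finset (Fin (3 * N))} (h : LabOff N H D C) {v : V}
    (hv : v ∉ D) (F : Finset (Fin (3 * N))) (hF : (nb H D v).card + F.card < N) :
    ∃ c, Free H D C v c ∧ c ∉ F := by
  have h1 : ((nb H D v).biUnion (fun s => C v ∩ C s) ∪ F).card < (C v).card := by
    rw [h.card]
    refine lt_of_le_of_lt (Finset.card_union_le _ _) ?_
    have : ((nb H D v).biUnion (fun s => C v ∩ C s)).card ≤ (nb H D v).card * 1 := by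
      apply Finset.card_biUnion_le_card_mul
      intro s hs
      rw [mem_nb] at hs
      rw [h.inter_card hv hs.2 hs.1]
    omega
  obtain ⟨c, hc, hc'⟩ := Finset.exists_mem_notMem_of_card_lt_card h1
  simp only [Finset.mem_union, Finset.mem_biUnion, Finset.mem_inter, mem_nb, not_or,
    not_exists, not_and] at hc'
  exact ⟨c, ⟨hc, fun s hs hsD hcs => hc'.1 s ⟨hs, hsD⟩ hc hcs⟩, hc'.2⟩

lemma ban_card {D : Finset V} {C : V → Finset (Fin (3 * N))} (h : LabOff N H D C) {v : V}
    (hv : v ∉ D) : (Finset.univ.filter (fun c => Ban H D C v c)).card ≤ (nb H D v).card := by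
  have : Finset.univ.filter (fun c => Ban H D C v c) ⊆
      (nb H D v).biUnion (fun s => C v ∩ C s) := by
    intro c hc
    rw [Finset.mem_filter] at hc
    obtain ⟨-, h1, s, h2, h3, h4⟩ := hc
    simp only [Finset.mem_biUnion, mem_nb, Finset.mem_inter]
    exact ⟨s, ⟨h2, h3⟩, h1, h4⟩
  refine (Finset.card_le_card this).trans ?_
  have := Finset.card_biUnion_le_card_mul (nb H D v) (fun s => C v ∩ C s) 1 (by
      intro s hs
      rw [mem_nb] at hs
      rw [h.inter_card hv hs.2 hs.1])
  simpa using this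

/-- the union of the labels of `t` and some neighbours -/
lemma union_card {D : Finset V} {C : V → Finset (Fin (3 * N))} (h : LabOff N H D C) {t : V}
    (ht : t ∉ D) (Q : Finset V) (hQ : Q ⊆ nb H D t) :
    (C t ∪ Q.biUnion C).card + Q.card ≤ N + Q.card * N := by
  induction Q using Finset.induction_on with
  | empty => simp [h.card]
  | insert s Q hs ih =>
    have ih := ih (fun x hx => hQ (Finset.mem_insert_of_mem hx))
    have hs' := mem_nb.1 (hQ (Finset.mem_insert_self s Q))
    rw [Finset.biUnion_insert, Finset.card_insert_of_notMem hs]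
    have e1 : C t ∪ (C s ∪ Q.biUnion C) = C s ∪ (C t ∪ Q.biUnion C) := by
      ext; simp; tauto
    rw [e1]
    have e2 := Finset.card_union_add_card_inter (C s) (C t ∪ Q.biUnion C)
    have e3 : 1 ≤ (C s ∩ (C t ∪ Q.biUnion C)).card := by
      rw [← h.inter_card ht hs'.2 hs'.1]
      apply Finset.card_le_card
      intro c; simp; tauto
    rw [h.card] at e2
    rw [add_mul]
    omega

/-- spare colours -/
lemma exists_spare {D : Finset V} {C : V → Finset (Fin (3 * N))} (h : LabOff N H D C) {t : V}
    (ht : t ∉ D) (Q : Finset V) (hQ : Q ⊆ nb H D t) (hQ2 : Q.card ≤ 2) (hN : 2 ≤ N)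
    (e : Fin (3 * N)) :
    ∃ p, p ≠ e ∧ p ∉ C t ∧ ∀ s ∈ Q, p ∉ C s := by
  have h1 := union_card h ht Q hQ
  have h2 : (insert e (C t ∪ Q.biUnion C)).card < 3 * N := by
    refine lt_of_le_of_lt (Finset.card_insert_le _ _) ?_
    interval_cases Q.card <;> omega
  obtain ⟨p, hp⟩ := exists_notMem _ h2
  simp only [Finset.mem_insert, Finset.mem_union, Finset.mem_biUnion, not_or, not_exists,
    not_and] at hp
  exact ⟨p, hp.1, hp.2.1, fun s hs => hp.2.2 s hs⟩

lemma nb_mono {D D' : Finset V} (hD : D ⊆ D') (x : V) : nb H D' x ⊆ nb H D x := by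
  intro s; simp only [mem_nb]; exact fun h => ⟨h.1, fun h' => h.2 (hD h')⟩

lemma nb_card_le_dg (D : Finset V) (x : V) : (nb H D x).card ≤ dg H x :=
  Finset.card_le_card (nb_mono (Finset.empty_subset _) x)


lemma SP.ban {D : Finset V} {C C' : V → Finset (Fin (3 * N))} (h : SP H D C C') {x : V}
    (hx : x ∉ D) (c : Fin (3 * N)) : Ban H D C x c ↔ Ban H D C' x c := by
  constructor
  · rintro ⟨h1, s, h2, h3, h4⟩
    have := (h x s hx h3 h2 c).1 ⟨h1, h4⟩
    exact ⟨this.1, s, h2, h3, this.2⟩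
  · rintro ⟨h1, s, h2, h3, h4⟩
    have := (h x s hx h3 h2 c).2 ⟨h1, h4⟩
    exact ⟨this.1, s, h2, h3, this.2⟩

lemma free_iff_not_ban {D : Finset V} {C : V → Finset (Fin (3 * N))} {x : V} {c : Fin (3 * N)} :
    Free H D C x c ↔ c ∈ C x ∧ ¬ Ban H D C x c := by
  unfold Free Ban
  constructor
  · rintro ⟨h1, h2⟩
    exact ⟨h1, fun ⟨_, s, h3, h4, h5⟩ => h2 s h3 h4 h5⟩
  · rintro ⟨h1, h2⟩
    exact ⟨h1, fun s h3 h4 h5 => h2 ⟨h1, s, h3, h4, h5⟩⟩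

lemma SP.free {D : Finset V} {C C' : V → Finset (Fin (3 * N))} (h : SP H D C C') {x : V}
    (hx : x ∉ D) {c : Fin (3 * N)} (hc : Free H D C x c) (hc' : c ∈ C' x) :
    Free H D C' x c := by
  rw [free_iff_not_ban] at *
  exact ⟨hc', fun hb => hc.2 ((h.ban hx c).2 hb)⟩

/-- Insert a 2-vertex. -/
lemma INS {D : Finset V} {C : V → Finset (Fin (3 * N))} {y v t : V} (hN : 2 ≤ N)
    (h : LabOff N H (insert y D) C) (hy : ∀ s, H.Adj y s ↔ s = v ∨ s = t) (hvt : v ≠ t)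
    (hv : v ∉ D) {g e : Fin (3 * N)} (hg : Free H (insert y D) C v g)
    (hgt : t ∉ D → g ∉ C t) (he : t ∉ D → Free H (insert y D) C t e ∧ e ∉ C v) :
    ∃ C', LabOff N H D C' ∧ (∀ z, z ≠ y → C' z = C z) ∧ g ∈ C' y ∧ (t ∉ D → e ∈ C' y) := by
  have hg1 := hg.1
  have hg2 := hg.2
  by_cases ht : t ∈ D
  · have hcard : N - 1 ≤ ((C v)ᶜ).card := by
      rw [Finset.card_compl, h.card]; simp; omega
    obtain ⟨M, hM, hMc⟩ := Finset.exists_subset_card_eq hcard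
    have hM' : ∀ c ∈ M, c ∉ C v := fun c hc => by simpa using hM hc
    have hgM : g ∉ M := fun hh => hM' g hh hg1
    refine ⟨Function.update C y (insert g M), SET h ?_ ?_ ?_ ?_ ?_, ?_, by simp, by simp [ht]⟩
    · rw [Finset.card_insert_of_notMem hgM, hMc]; omega
    · intro x hx hxD
      rcases (hy x).1 hx with rfl | rfl
      · exact ⟨g, by simp, hg1⟩
      · exact absurd ht hxD
    · intro x hx hxD c c' h1 h2 h3 h4
      rcases (hy x).1 hx with rfl | rfl
      · simp only [Finset.mem_insert] at h1 h3
        grind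
      · exact absurd ht hxD
    · intro x x' hx hx' hxD hxD' hne
      grind
    · intro x z hx hxz hxD hzD hzy c hc hcx
      rcases (hy x).1 hx with rfl | rfl
      · simp only [Finset.mem_insert] at hc
        have : c = g := by grind
        subst this
        exact hg2 z hxz (by simp [hzy, hzD])
      · exact absurd ht hxD
    · intro z hz; simp [hz]
  · have he' := (he ht).2
    have hgt' := hgt ht
    have he1 := (he ht).1.1
    have he2 := (he ht).1.2
    have hcard : N - 2 ≤ ((C v ∪ C t)ᶜ).card := by
      have := card_compl_union (h.card v) (h.card t); omega
    obtain ⟨M, hM, hMc⟩ := Finset.exists_subset_card_eq hcard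
    have hM' : ∀ c ∈ M, c ∉ C v ∧ c ∉ C t := fun c hc => by simpa using hM hc
    have hge : g ≠ e := by rintro rfl; exact he' hg1
    have hgM : g ∉ insert e M := by
      simp only [Finset.mem_insert, not_or]; exact ⟨hge, fun hh => (hM' g hh).1 hg1⟩
    have heM : e ∉ M := fun hh => (hM' e hh).2 he1
    refine ⟨Function.update C y (insert g (insert e M)), SET h ?_ ?_ ?_ ?_ ?_, ?_, by simp,
      by simp⟩
    · rw [Finset.card_insert_of_notMem hgM, Finset.card_insert_of_notMem heM, hMc]; omega
    · intro x hx hxD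
      rcases (hy x).1 hx with rfl | rfl
      · exact ⟨g, by simp, hg1⟩
      · exact ⟨e, by simp, he1⟩
    · intro x hx hxD c c' h1 h2 h3 h4
      simp only [Finset.mem_insert] at h1 h3
      rcases (hy x).1 hx with rfl | rfl
      · grind
      · grind
    · intro x x' hx hx' hxD hxD' hne c hc hcx hcx'
      simp only [Finset.mem_insert] at hc
      have := (hy x).1 hx
      have := (hy x').1 hx'
      grind
    · intro x z hx hxz hxD hzD hzy c hc hcx
      simp only [Finset.mem_insert] at hc
      rcases (hy x).1 hx with rfl | rfl
      · have : c = g := by grind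
        subst this
        exact hg2 z hxz (by simp [hzy, hzD])
      · have : c = e := by grind
        subst this
        exact he2 z hxz (by simp [hzy, hzD])
    · intro z hz; simp [hz]

/-- Insert a tiny2 vertex together with its 2-neighbour. -/
lemma FIN {D : Finset V} {C : V → Finset (Fin (3 * N))} {u v w x y : V} (hN : 3 ≤ N)
    (h : LabOff N H (insert v (insert u D)) C)
    (hv : ∀ s, H.Adj v s ↔ s = x ∨ s = y ∨ s = u) (hu : ∀ s, H.Adj u s ↔ s = v ∨ s = w)
    (hxy : x ≠ y) (hvw : v ≠ w) (hvD : v ∉ D) (hw : w ∉ D)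
    {a b p e : Fin (3 * N)} (ha : Free H (insert v (insert u D)) C x a) (hay : a ∉ C y)
    (hb : Free H (insert v (insert u D)) C y b) (hbx : b ∉ C x)
    (hpx : p ∉ C x) (hpy : p ∉ C y) (hpw : p ∉ C w)
    (he : Free H (insert v (insert u D)) C w e) (hea : e ≠ a) (heb : e ≠ b) :
    ∃ C', LabOff N H D C' ∧ (∀ z, z ≠ u → z ≠ v → C' z = C z) ∧ a ∈ C' v ∧ b ∈ C' v ∧
      p ∈ C' v ∧ p ∈ C' u ∧ e ∈ C' u := by
  have ha1 := ha.1
  have hb1 := hb.1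
  have ha2 := ha.2
  have hb2 := hb.2
  have he1 := he.1
  have huv : H.Adj u v := (hu v).2 (Or.inl rfl)
  have hne := huv.ne
  have hab : a ≠ b := by rintro rfl; exact hay hb1
  have hap : a ≠ p := by rintro rfl; exact hpx ha1
  have hbp : b ≠ p := by rintro rfl; exact hpy hb1
  have hpe : p ≠ e := by rintro rfl; exact hpw he1
  have hcard : N - 3 ≤ (((C x ∪ C y)ᶜ.erase p).erase e).card := by
    have := card_compl_union (h.card x) (h.card y)
    have h1 := Finset.pred_card_le_card_erase (s := (C x ∪ C y)ᶜ) (a := p)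
    have h2 := Finset.pred_card_le_card_erase (s := (C x ∪ C y)ᶜ.erase p) (a := e)
    omega
  obtain ⟨M, hM, hMc⟩ := Finset.exists_subset_card_eq hcard
  have hM' : ∀ c ∈ M, c ∉ C x ∧ c ∉ C y ∧ c ≠ p ∧ c ≠ e := fun c hc => by
    have := hM hc; simp only [Finset.mem_erase, Finset.mem_compl, Finset.mem_union] at this
    tauto
  have haM : a ∉ insert b (insert p M) := by
    simp only [Finset.mem_insert, not_or]; exact ⟨hab, hap, fun hh => (hM' a hh).1 ha1⟩
  have hbM : b ∉ insert p M := by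
    simp only [Finset.mem_insert, not_or]; exact ⟨hbp, fun hh => (hM' b hh).2.1 hb1⟩
  have hpM : p ∉ M := fun hh => (hM' p hh).2.2.1 rfl
  set K := insert a (insert b (insert p M)) with hK
  have hKm : ∀ c, c ∈ K → c = a ∨ c = b ∨ c = p ∨ c ∈ M := by
    intro c hc; simpa [hK] using hc
  have hS : LabOff N H (insert u D) (Function.update C v K) := by
    refine SET h ?_ ?_ ?_ ?_ ?_
    · rw [hK, Finset.card_insert_of_notMem haM, Finset.card_insert_of_notMem hbM,
        Finset.card_insert_of_notMem hpM, hMc]; omega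
    · intro z hz hzD
      rcases (hv z).1 hz with rfl | rfl | rfl
      · exact ⟨a, by simp [hK], ha1⟩
      · exact ⟨b, by simp [hK], hb1⟩
      · simp at hzD
    · intro z hz hzD c c' h1 h2 h3 h4
      have h1 := hKm c h1
      have h3 := hKm c' h3
      rcases (hv z).1 hz with rfl | rfl | rfl
      · grind
      · grind
      · simp at hzD
    · intro z z' hz hz' hzD hzD' hne c hc hcx hcx'
      have hc := hKm c hc
      have h1 := (hv z).1 hz
      have h2 := (hv z').1 hz'
      simp only [Finset.mem_insert, not_or] at hzD hzD'
      grind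
    · intro z z' hz hzz hzD hzD' hzy c hc hcx
      have hc := hKm c hc
      rcases (hv z).1 hz with rfl | rfl | rfl
      · have : c = a := by grind
        subst this
        exact ha2 z' hzz (by rw [Finset.mem_insert, not_or]; exact ⟨hzy, hzD'⟩)
      · have : c = b := by grind
        subst this
        exact hb2 z' hzz (by rw [Finset.mem_insert, not_or]; exact ⟨hzy, hzD'⟩)
      · simp at hzD
  have heK : e ∉ K := by
    intro hh
    have := hKm e hh
    grind
  obtain ⟨C', h1, h2, h3, h4⟩ := INS (y := u) (v := v) (t := w) (g := p) (e := e) (by omega) hS hu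
    hvw hvD ⟨by simp [hK], by
      intro s hs hsD
      rcases (hv s).1 hs with rfl | rfl | rfl
      · simpa [hs.ne.symm] using hpx
      · simpa [hs.ne.symm] using hpy
      · simp at hsD⟩ (by intro _; simpa [hvw.symm] using hpw) (by
      intro _
      refine ⟨⟨by simpa [hvw.symm] using he1, ?_⟩, by simpa using heK⟩
      intro s hs hsD
      by_cases hsv : s = v
      · subst hsv; simpa using heK
      · rw [Function.update_of_ne hsv]
        exact he.2 s hs (by rw [Finset.mem_insert, not_or]; exact ⟨hsv, hsD⟩))
  have hv' : C' v = K := by rw [h2 v hne.symm]; simp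
  refine ⟨C', h1, ?_, by simp [hv', hK], by simp [hv', hK], by simp [hv', hK], h3, h4 hw⟩
  intro z hz hz'
  rw [h2 z hz]; simp [hz']


lemma AV2 {D : Finset V} {C : V → Finset (Fin (3 * N))} {t : V} (hN : 2 ≤ N)
    (h : LabOff N H D C) (ht : t ∉ D) (hd : (nb H D t).card ≤ 2) {p : Fin (3 * N)}
    (hp : Free H D C t p) (e : Fin (3 * N)) :
    ∃ C', LabOff N H D C' ∧ SP H D C C' ∧ p ∉ C' t ∧ (∀ y, y ≠ t → C' y = C y) ∧
      (e ∈ C' t → e ∈ C t) := by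
  obtain ⟨p', h1, h2, h3⟩ := exists_spare h ht (nb H D t) (le_refl _) hd hN e
  obtain ⟨C', g1, g2, g3, g4⟩ := EX h ht hp h2 (fun s hs hsD => h3 s (mem_nb.2 ⟨hs, hsD⟩))
  refine ⟨C', g1, g2, ?_, g4, ?_⟩
  · rw [g3]; have := hp.1; grind
  · rw [g3]; grind

/-- the 2-neighbour of a tiny2 vertex -/
lemma Tiny2.exists_two {t : V} (ht : Tiny2 H t) : ∃ u, H.Adj t u ∧ dg H u = 2 := by
  have h2 := ht.2
  unfold bb at h2
  obtain ⟨u, hu⟩ := Finset.card_pos.1 (by omega : 0 <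
    ((nb H ∅ t).filter (fun s => dg H s = 2)).card)
  rw [Finset.mem_filter, mem_nb] at hu
  exact ⟨u, hu.1.1, hu.2⟩

lemma exists_nbr {x : V} {n : ℕ} (h : dg H x = n + 1) : ∃ s, H.Adj x s := by
  unfold dg at h
  obtain ⟨u, hu⟩ := Finset.card_pos.1 (by omega : 0 < (nb H ∅ x).card)
  exact ⟨u, (mem_nb.1 hu).1⟩

/-- the other neighbour of a 2-vertex -/
lemma other_nbr {z v : V} (hz : dg H z = 2) (hv : H.Adj z v) :
    ∃ w, w ≠ v ∧ ∀ s, H.Adj z s ↔ s = v ∨ s = w := by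
  unfold dg at hz
  obtain ⟨a, b, hab, hs⟩ := Finset.card_eq_two.1 hz
  have hm : ∀ s, H.Adj z s ↔ s = a ∨ s = b := by
    intro s
    have : s ∈ nb H ∅ z ↔ s ∈ ({a, b} : Finset V) := by rw [hs]
    simpa [mem_nb] using this
  rcases (hm v).1 hv with rfl | rfl
  · exact ⟨b, hab.symm, hm⟩
  · exact ⟨a, hab, fun s => by rw [hm]; tauto⟩

/-- the other neighbours of a 3-vertex -/
lemma other_nbrs {z v : V} (hz : dg H z = 3) (hv : H.Adj z v) :
    ∃ x y, x ≠ y ∧ x ≠ v ∧ y ≠ v ∧ ∀ s, H.Adj z s ↔ s = x ∨ s = y ∨ s = v := by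
  unfold dg at hz
  have hv' : v ∈ nb H ∅ z := by simp [mem_nb, hv]
  have h2 : ((nb H ∅ z).erase v).card = 2 := by rw [Finset.card_erase_of_mem hv', hz]
  obtain ⟨a, b, hab, hs⟩ := Finset.card_eq_two.1 h2
  have ha : a ∈ (nb H ∅ z).erase v := by rw [hs]; simp
  have hb : b ∈ (nb H ∅ z).erase v := by rw [hs]; simp
  refine ⟨a, b, hab, (Finset.mem_erase.1 ha).1, (Finset.mem_erase.1 hb).1, ?_⟩
  intro s
  by_cases hsv : s = v
  · subst hsv; simp [hv]
  · have : s ∈ (nb H ∅ z).erase v ↔ s ∈ ({a, b} : Finset V) := by rw [hs]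
    simpa [mem_nb, hsv] using this

/-- Remove a free colour from a light vertex. -/
lemma AV {D : Finset V} {C : V → Finset (Fin (3 * N))} {t : V} (hN : 2 ≤ N)
    (h : LabOff N H D C) (ht : t ∉ D) (hl : Light H t) {p : Fin (3 * N)}
    (hp : Free H D C t p) :
    ∃ C', LabOff N H D C' ∧ SP H D C C' ∧ p ∉ C' t ∧ (∀ y, p ∈ C' y → p ∈ C y) ∧
      (∀ y, C' y ≠ C y → y ∉ D ∧ (y = t ∨ (Tiny2 H t ∧ H.Adj t y ∧ dg H y = 2))) := by
  rcases hl with hl | hl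
  · obtain ⟨C', g1, g2, g3, g4, -⟩ := AV2 hN h ht ((nb_card_le_dg D t).trans hl.le) hp p
    refine ⟨C', g1, g2, g3, ?_, ?_⟩
    · intro y hy
      by_cases hyt : y = t
      · subst hyt; exact absurd hy g3
      · rwa [g4 y hyt] at hy
    · intro y hy
      by_cases hyt : y = t
      · subst hyt; exact ⟨ht, Or.inl rfl⟩
      · exact absurd (g4 y hyt) hy
  · obtain ⟨u, hu, hu2⟩ := hl.exists_two
    obtain ⟨w, hwt, hw⟩ := other_nbr hu2 hu.symm
    have hQ : ((nb H D t).erase u).card ≤ 2 := by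
      have h1 : (nb H D t).erase u ⊆ (nb H ∅ t).erase u :=
        Finset.erase_subset_erase _ (nb_mono (Finset.empty_subset _) t)
      have h2 : u ∈ nb H ∅ t := by simp [mem_nb, hu]
      have h3 := Finset.card_le_card h1
      rw [Finset.card_erase_of_mem h2] at h3
      have : (nb H ∅ t).card = 3 := hl.1
      omega
    have hE : ∃ e, ∀ c, u ∉ D → w ∉ D → c ∈ C u → c ∈ C w → c = e := by
      by_cases h1 : ∃ c, u ∉ D ∧ w ∉ D ∧ c ∈ C u ∧ c ∈ C w
      · obtain ⟨e, a1, a2, a3, a4⟩ := h1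
        exact ⟨e, fun c _ _ b3 b4 => h.uniq u w a1 a2 ((hw w).2 (Or.inr rfl)) c e b3 b4 a3 a4⟩
      · exact ⟨p, fun c a1 a2 a3 a4 => absurd ⟨c, a1, a2, a3, a4⟩ h1⟩
    obtain ⟨e, he⟩ := hE
    obtain ⟨p2, f1, f2, f3⟩ := exists_spare h ht ((nb H D t).erase u) (Finset.erase_subset _ _)
      hQ hN e
    have hpp2 : p ≠ p2 := by rintro rfl; exact f2 hp.1
    have key : ∃ C', LabOff N H D C' ∧ SP H D C C' ∧ (u ∉ D → p2 ∉ C' u) ∧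
        (∀ y, y ≠ u → C' y = C y) ∧ (p ∈ C' u → p ∈ C u) ∧ (u ∈ D → C' u = C u) := by
      by_cases hup : u ∉ D ∧ p2 ∈ C u
      · obtain ⟨C', g1, g2, g3, g4, g5⟩ := AV2 hN h hup.1 ((nb_card_le_dg D u).trans hu2.le)
          (p := p2) ⟨hup.2, by
            intro s hs hsD hps
            rcases (hw s).1 hs with rfl | rfl
            · exact f2 hps
            · exact f1 (he p2 hup.1 hsD hup.2 hps)⟩ p
        exact ⟨C', g1, g2, fun _ => g3, g4, g5, fun hh => absurd hh hup.1⟩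
      · push Not at hup
        exact ⟨C, h, SP.refl C, hup, fun _ _ => rfl, id, fun _ => rfl⟩
    obtain ⟨C1, g1, g2, g3, g4, g5, g6⟩ := key
    have e1 : C1 t = C t := g4 t hu.ne
    obtain ⟨C', k1, k2, k3, k4⟩ := EX g1 ht (g := p) (p := p2) (g2.free ht hp (by
      rw [e1]; exact hp.1)) (by rw [e1]; exact f2) (by
      intro s hs hsD
      by_cases hsu : s = u
      · subst hsu; exact g3 hsD
      · rw [g4 s hsu]
        exact f3 s (Finset.mem_erase.2 ⟨hsu, mem_nb.2 ⟨hs, hsD⟩⟩))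
    have hpt : p ∉ C' t := by rw [k3]; grind
    refine ⟨C', k1, g2.trans k2, hpt, ?_, ?_⟩
    · intro y hy
      by_cases hyt : y = t
      · subst hyt; exact absurd hy hpt
      · rw [k4 y hyt] at hy
        by_cases hyu : y = u
        · subst hyu; exact g5 hy
        · rwa [g4 y hyu] at hy
    · intro y hy
      by_cases hyt : y = t
      · subst hyt; exact ⟨ht, Or.inl rfl⟩
      · rw [k4 y hyt] at hy
        by_cases hyu : y = u
        · subst hyu
          exact ⟨fun hh => hy (g6 hh), Or.inr ⟨hl, hu, hu2⟩⟩
        · exact absurd (g4 y hyu) hy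

lemma CLEAR {D : Finset V} {x : V} (hN : 2 ≤ N) {p : Fin (3 * N)} (n : ℕ) :
    ∀ C : V → Finset (Fin (3 * N)), LabOff N H D C →
    ((nb H D x).filter (fun s => p ∈ C s)).card = n → p ∉ C x →
    (∀ s, H.Adj x s → s ∉ D → p ∉ C s ∨ ((dg H s = 2 ∨ (Tiny2 H s ∧ dg H x ≠ 2)) ∧
      ¬ Ban H D C s p)) →
    ∃ C', LabOff N H D C' ∧ SP H D C C' ∧ C' x = C x ∧ (∀ s, H.Adj x s → s ∉ D → p ∉ C' s) ∧
      (∀ y, C' y ≠ C y → y ∉ D ∧ ((H.Adj x y ∧ Light H y ∧ p ∈ C y) ∨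
        (∃ t, H.Adj x t ∧ t ∉ D ∧ Tiny2 H t ∧ p ∈ C t ∧ H.Adj t y ∧ dg H y = 2))) := by
  induction n using Nat.strong_induction_on with
  | _ n ih =>
  intro C h hn hpx hs
  by_cases hall : ∀ s, H.Adj x s → s ∉ D → p ∉ C s
  · exact ⟨C, h, SP.refl C, rfl, hall, fun y hy => absurd rfl hy⟩
  push Not at hall
  obtain ⟨s, hxs, hsD, hps⟩ := hall
  have h1 := (hs s hxs hsD).resolve_left (by simpa using hps)
  have hfree : Free H D C s p := free_iff_not_ban.2 ⟨hps, h1.2⟩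
  have hl : Light H s := h1.1.imp id And.left
  obtain ⟨C1, g1, g2, g3, g4, g5⟩ := AV hN h hsD hl hfree
  have e1 : C1 x = C x := by
    by_contra hne
    rcases (g5 x hne).2 with hh | hh
    · exact hxs.ne hh
    · rcases h1.1 with h2 | h2
      · have := hh.1.1; omega
      · exact h2.2 hh.2.2
  have hlt : ((nb H D x).filter (fun s => p ∈ C1 s)).card < n := by
    rw [← hn]
    apply Finset.card_lt_card
    refine ⟨fun y hy => ?_, fun hh => ?_⟩
    · rw [Finset.mem_filter] at *
      exact ⟨hy.1, g4 y hy.2⟩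
    · have : s ∈ (nb H D x).filter (fun s => p ∈ C1 s) := hh (by
        rw [Finset.mem_filter, mem_nb]; exact ⟨⟨hxs, hsD⟩, hps⟩)
      exact g3 (Finset.mem_filter.1 this).2
  obtain ⟨C', k1, k2, k3, k4, k5⟩ := ih _ hlt C1 g1 rfl (by rw [e1]; exact hpx) (by
    intro s' hs' hsD'
    rcases hs s' hs' hsD' with a | a
    · exact Or.inl (fun hh => a (g4 _ hh))
    · exact Or.inr ⟨a.1, fun hb => a.2 ((g2.ban hsD' p).2 hb)⟩)
  refine ⟨C', k1, g2.trans k2, k3.trans e1, k4, ?_⟩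
  intro y hy
  by_cases hy1 : C' y = C1 y
  · rw [hy1] at hy
    obtain ⟨a, b⟩ := g5 y hy
    refine ⟨a, ?_⟩
    rcases b with rfl | b
    · exact Or.inl ⟨hxs, hl, hps⟩
    · exact Or.inr ⟨s, hxs, hsD, b.1, hps, b.2⟩
  · obtain ⟨a, b⟩ := k5 y hy1
    refine ⟨a, b.imp (fun q => ⟨q.1, q.2.1, g4 _ q.2.2⟩) ?_⟩
    rintro ⟨t, t1, t0, t2, t3, t4⟩
    exact ⟨t, t1, t0, t2, g4 _ t3, t4⟩

/-- Bring the colour `p` in at `x` in place of the free colour `g`. -/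
lemma BR {D : Finset V} {C : V → Finset (Fin (3 * N))} {x : V} (hN : 2 ≤ N)
    (h : LabOff N H D C) (hx : x ∉ D) {g p : Fin (3 * N)} (hg : Free H D C x g) (hpx : p ∉ C x)
    (hs : ∀ s, H.Adj x s → s ∉ D → p ∉ C s ∨ ((dg H s = 2 ∨ (Tiny2 H s ∧ dg H x ≠ 2)) ∧
      ¬ Ban H D C s p)) :
    ∃ C', LabOff N H D C' ∧ SP H D C C' ∧ C' x = insert p ((C x).erase g) ∧
      (∀ y, C' y ≠ C y → y ∉ D ∧ (y = x ∨ (H.Adj x y ∧ Light H y ∧ p ∈ C y) ∨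
        (∃ t, H.Adj x t ∧ t ∉ D ∧ Tiny2 H t ∧ p ∈ C t ∧ H.Adj t y ∧ dg H y = 2))) := by
  obtain ⟨C1, g1, g2, g3, g4, g5⟩ := CLEAR hN _ C h rfl hpx hs
  obtain ⟨C', k1, k2, k3, k4⟩ := EX g1 hx (g := g) (p := p) (g2.free hx hg (by
    rw [g3]; exact hg.1)) (by rw [g3]; exact hpx) g4
  refine ⟨C', k1, g2.trans k2, by rw [k3, g3], ?_⟩
  intro y hy
  by_cases hyx : y = x
  · subst hyx; exact ⟨hx, Or.inl rfl⟩
  · rw [k4 y hyx] at hy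
    obtain ⟨a, b⟩ := g5 y hy
    exact ⟨a, Or.inr b⟩

/-- colours that may be moved into the label of `x` -/
def UU (H : SimpleGraph V) (D : Finset V) (C : V → Finset (Fin (3 * N))) (x : V)
    (c : Fin (3 * N)) : Prop :=
  (∀ r, H.Adj x r → r ∉ D → ¬ Light H r → c ∉ C r) ∧
  (∀ t, H.Adj x t → t ∉ D → Light H t → ¬ Ban H D C t c)

/-- Relabel `x` with any admissible set. -/
lemma RL {D : Finset V} {x : V} (hN : 2 ≤ N) (hx : x ∉ D) (hx2 : dg H x ≠ 2)
    (T : Finset (Fin (3 * N))) (hT : T.card = N) (n : ℕ) :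
    ∀ C : V → Finset (Fin (3 * N)), LabOff N H D C → (T \ C x).card = n →
    (∀ c, Ban H D C x c → c ∈ T) → (∀ c ∈ T, Ban H D C x c ∨ UU H D C x c) →
    ∃ C', LabOff N H D C' ∧ SP H D C C' ∧ C' x = T ∧
      (∀ y, C' y ≠ C y → y ∉ D ∧ (y = x ∨ (H.Adj x y ∧ Light H y) ∨ dg H y = 2)) := by
  induction n with
  | zero =>
    intro C h h0 h1 h2
    refine ⟨C, h, SP.refl C, ?_, fun y hy => absurd rfl hy⟩
    have : T ⊆ C x := by rwa [Finset.card_eq_zero, Finset.sdiff_eq_empty_iff_subset] at h0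
    exact (Finset.eq_of_subset_of_card_le this (by rw [hT, h.card])).symm
  | succ n ih =>
    intro C h h0 h1 h2
    obtain ⟨p, hp⟩ := Finset.card_pos.1 (by omega : 0 < (T \ C x).card)
    have h0' : (C x \ T).card = n + 1 := by
      have a := Finset.card_sdiff_add_card_inter T (C x)
      have b := Finset.card_sdiff_add_card_inter (C x) T
      rw [Finset.inter_comm, h.card] at b
      omega
    obtain ⟨g, hg⟩ := Finset.card_pos.1 (by omega : 0 < (C x \ T).card)
    rw [Finset.mem_sdiff] at hp hg
    have hgF : Free H D C x g := free_iff_not_ban.2 ⟨hg.1, fun hb => hg.2 (h1 g hb)⟩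
    have hU := (h2 p hp.1).resolve_left (fun hb => hp.2 hb.1)
    obtain ⟨C1, g1, g2, g3, g4⟩ := BR hN h hx hgF hp.2 (by
      intro s hs hsD
      by_cases hl : Light H s
      · exact Or.inr ⟨hl.imp id (fun hh => ⟨hh, hx2⟩), hU.2 s hs hsD hl⟩
      · exact Or.inl (hU.1 s hs hsD hl))
    obtain ⟨C', k1, k2, k3, k4⟩ := ih C1 g1 (by
      rw [g3]
      have : T \ insert p ((C x).erase g) = (T \ C x).erase p := by
        ext c; simp only [Finset.mem_sdiff, Finset.mem_insert, Finset.mem_erase]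
        grind
      rw [this, Finset.card_erase_of_mem (Finset.mem_sdiff.2 hp), h0]; rfl)
      (fun c hc => h1 c ((g2.ban hx c).2 hc)) (by
        intro c hc
        refine (h2 c hc).imp (g2.ban hx c).1 ?_
        rintro ⟨a, b⟩
        refine ⟨fun r hr hrD hl => ?_, fun t ht htD hl hb => b t ht htD hl ((g2.ban htD c).2 hb)⟩
        have : C1 r = C r := by
          by_contra hne
          rcases (g4 r hne).2 with q | q | ⟨t, q1, q0, q2, q3, q4, q5⟩
          · exact hr.ne q.symm
          · exact hl q.2.1
          · exact hl (Or.inl q5)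
        rw [this]; exact a r hr hrD hl)
    refine ⟨C', k1, g2.trans k2, k3, ?_⟩
    intro y hy
    by_cases hy1 : C' y = C1 y
    · rw [hy1] at hy
      obtain ⟨a, b⟩ := g4 y hy
      refine ⟨a, ?_⟩
      rcases b with q | q | ⟨t, q1, q0, q2, q3, q4, q5⟩
      · exact Or.inl q
      · exact Or.inr (Or.inl ⟨q.1, q.2.1⟩)
      · exact Or.inr (Or.inr q5)
    · exact k4 y hy1


/-- A minimal counterexample. -/
structure MinCE (N : ℕ) (H : SimpleGraph V) : Prop where
  hN : 7 ≤ N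
  hdeg : ∀ v, dg H v ≤ N
  hno : ∀ C, ¬ LabOff N H ∅ C
  hmin : ∀ u, 0 < dg H u → ∃ C, LabOff N H {u} C

lemma nb_card_add_le {D Q : Finset V} {v : V} (hQ : Q ⊆ D) (hQ' : ∀ q ∈ Q, H.Adj v q) :
    (nb H D v).card + Q.card ≤ dg H v := by
  unfold dg
  rw [← Finset.card_union_of_disjoint]
  · apply Finset.card_le_card
    intro s hs
    rw [Finset.mem_union, mem_nb] at hs
    rw [mem_nb]
    rcases hs with hs | hs
    · exact ⟨hs.1, by simp⟩
    · exact ⟨hQ' s hs, by simp⟩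
  · rw [Finset.disjoint_left]
    intro s hs hs'
    exact (mem_nb.1 hs).2 (hQ hs')

lemma nb_card_succ_le {D : Finset V} {v z : V} (hz : z ∈ D) (hvz : H.Adj v z) :
    (nb H D v).card + 1 ≤ dg H v := by
  have := nb_card_add_le (H := H) (D := D) (Q := {z}) (v := v) (by simpa using hz)
    (by simpa using hvz)
  simpa using this

lemma dg_pos {v z : V} (h : H.Adj v z) : 0 < dg H v :=
  Finset.card_pos.2 ⟨z, by simp [mem_nb, h]⟩

lemma MinCE.two_le (hM : MinCE N H) {u v : V} (huv : H.Adj u v) : 2 ≤ dg H u := by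
  by_contra hlt
  have h1 := dg_pos huv
  have h1 : dg H u = 1 := by omega
  have hN := hM.hN
  have hu : ∀ s, H.Adj u s ↔ s = v := by
    obtain ⟨a, ha⟩ := Finset.card_eq_one.1 h1
    have hm : ∀ s, H.Adj u s ↔ s = a := by
      intro s
      have : s ∈ nb H ∅ u ↔ s ∈ ({a} : Finset V) := by rw [ha]
      simpa [mem_nb] using this
    have := (hm v).1 huv
    subst this
    exact hm
  obtain ⟨C, h⟩ := hM.hmin u (by omega)
  have h' : LabOff N H (insert u ∅) C := h
  have hvu : v ∉ ({u} : Finset V) := by simpa using huv.ne.symm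
  have hc := nb_card_succ_le (H := H) (D := {u}) (v := v) (z := u) (by simp) huv.symm
  have hd := hM.hdeg v
  obtain ⟨g, hg, -⟩ := exists_free h hvu ∅ (by simp; omega)
  have hcard : N - 1 ≤ ((C v)ᶜ).card := by
    rw [Finset.card_compl, h.card]; simp; omega
  obtain ⟨M, hM1, hMc⟩ := Finset.exists_subset_card_eq hcard
  have hM' : ∀ c ∈ M, c ∉ C v := fun c hc => by simpa using hM1 hc
  have hgM : g ∉ M := fun hh => hM' g hh hg.1
  apply hM.hno (Function.update C u (insert g M))
  have hK : ∀ c, c ∈ insert g M → c ∈ C v → c = g := by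
    intro c hc hcv
    rcases Finset.mem_insert.1 hc with q | q
    · exact q
    · exact absurd hcv (hM' c q)
  refine SET h' ?_ ?_ ?_ ?_ ?_
  · rw [Finset.card_insert_of_notMem hgM, hMc]; omega
  · intro x hx _
    rw [hu] at hx; subst hx
    exact ⟨g, by simp, hg.1⟩
  · intro x hx _ c c' a b a' b'
    rw [hu] at hx; subst hx
    rw [hK c a b, hK c' a' b']
  · intro x y hx hy _ _ hne
    rw [hu] at hx hy
    exact absurd (hx.trans hy.symm) hne
  · intro x y hx hxy _ _ hyu c hcK hcx
    rw [hu] at hx; subst hx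
    rw [hK c hcK hcx]
    exact hg.2 y hxy (by simpa using hyu)

/-- neighbours of a 2-vertex are not adjacent -/
lemma MinCE.triangle (hM : MinCE N H) {z v w : V} (hz : dg H z = 2) (hv : H.Adj z v)
    (hw : H.Adj z w) : ¬ H.Adj v w := by
  intro hvw
  have hN := hM.hN
  obtain ⟨w', hne, hw'⟩ := other_nbr hz hv
  rcases (hw' w).1 hw with q | q
  · exact hvw.ne q.symm
  subst q
  obtain ⟨C, h⟩ := hM.hmin z (by omega)
  have hzv : v ∉ ({z} : Finset V) := by simpa using hv.ne.symm
  have hzw : w ∉ ({z} : Finset V) := by simpa using hw.ne.symm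
  have hc := nb_card_succ_le (H := H) (D := {z}) (v := v) (z := z) (by simp) hv.symm
  have hd := hM.hdeg v
  have hc2 := nb_card_succ_le (H := H) (D := {z}) (v := w) (z := z) (by simp) hw.symm
  have hd2 := hM.hdeg w
  obtain ⟨g, hg, -⟩ := exists_free h hzv ∅ (by simp; omega)
  obtain ⟨e, he, -⟩ := exists_free h hzw ∅ (by simp; omega)
  obtain ⟨C', h', -⟩ := INS (D := ∅) (y := z) (v := v) (t := w) (g := g) (e := e) (by omega) h
    hw' hne.symm (by simp) hg (fun _ => hg.2 w hvw hzw) (fun _ => ⟨he, he.2 v hvw.symm hzv⟩)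
  exact hM.hno C' h'

def Tiny1 (H : SimpleGraph V) (v : V) : Prop :=
  (dg H v = bb H v ∧ bb H v ≤ 5) ∨ (dg H v = bb H v + 1 ∧ bb H v ≤ 3)

lemma bb_add (v : V) : bb H v + ((nb H ∅ v).filter (fun s => ¬ dg H s = 2)).card = dg H v :=
  Finset.card_filter_add_card_filter_not (s := nb H ∅ v) (fun s => dg H s = 2)

lemma Tiny1.uniq {v x x' : V} (hv : Tiny1 H v) (h1 : H.Adj v x) (h2 : H.Adj v x')
    (hx : dg H x ≠ 2) (hx' : dg H x' ≠ 2) : x = x' := by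
  have h := bb_add (H := H) v
  have : ((nb H ∅ v).filter (fun s => ¬ dg H s = 2)).card ≤ 1 := by
    rcases hv with q | q <;> omega
  rw [Finset.card_le_one] at this
  exact this x (by simp [mem_nb, h1, hx]) x' (by simp [mem_nb, h2, hx'])

noncomputable def FB (H : SimpleGraph V) (D : Finset V) (C : V → Finset (Fin (3 * N))) (v : V) :
    Finset (Fin (3 * N)) :=
  (nb H D v).biUnion (fun s => if dg H s = 2 then Finset.univ.filter (fun c => Ban H D C s c)
    else C s)

lemma not_mem_FB {D : Finset V} {C : V → Finset (Fin (3 * N))} {v : V} {p : Fin (3 * N)}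
    (hp : p ∉ FB H D C v) {s : V} (hs : H.Adj v s) (hsD : s ∉ D) :
    (dg H s = 2 ∧ ¬ Ban H D C s p) ∨ (dg H s ≠ 2 ∧ p ∉ C s) := by
  have : p ∉ (if dg H s = 2 then Finset.univ.filter (fun c => Ban H D C s c) else C s) := by
    intro hh
    apply hp
    unfold FB
    rw [Finset.mem_biUnion]
    exact ⟨s, mem_nb.2 ⟨hs, hsD⟩, hh⟩
  by_cases h2 : dg H s = 2
  · rw [if_pos h2] at this
    exact Or.inl ⟨h2, fun hb => this (Finset.mem_filter.2 ⟨Finset.mem_univ _, hb⟩)⟩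
  · rw [if_neg h2] at this
    exact Or.inr ⟨h2, this⟩

lemma FB_card {D : Finset V} {C : V → Finset (Fin (3 * N))} {v z : V} (hN : 7 ≤ N)
    (h : LabOff N H D C) (hv : Tiny1 H v) (hz : z ∈ D) (hvz : H.Adj v z)
    (hz2 : dg H z = 2) : (FB H D C v).card ≤ N + 4 := by
  set A := (nb H D v).filter (fun s => dg H s = 2) with hA
  set B := (nb H D v).filter (fun s => ¬ dg H s = 2) with hB
  have hAc : A.card + 1 ≤ bb H v := by
    have hzA : z ∉ A := by
      rw [hA, Finset.mem_filter, mem_nb]; exact fun hh => hh.1.2 hz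
    rw [← Finset.card_insert_of_notMem hzA]
    apply Finset.card_le_card
    intro s hs
    rw [Finset.mem_insert] at hs
    rw [Finset.mem_filter, mem_nb]
    rcases hs with rfl | hs
    · exact ⟨⟨hvz, by simp⟩, hz2⟩
    · rw [hA, Finset.mem_filter, mem_nb] at hs
      exact ⟨⟨hs.1.1, by simp⟩, hs.2⟩
  have hBc : B.card + bb H v ≤ dg H v := by
    rw [← bb_add v, add_comm]
    apply Nat.add_le_add_left
    apply Finset.card_le_card
    exact Finset.filter_subset_filter _ (nb_mono (Finset.empty_subset _) v)
  have hsub : FB H D C v ⊆ A.biUnion (fun s => Finset.univ.filter (fun c => Ban H D C s c)) ∪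
      B.biUnion C := by
    intro c hc
    unfold FB at hc
    rw [Finset.mem_biUnion] at hc
    obtain ⟨s, hs, hcs⟩ := hc
    rw [Finset.mem_union, Finset.mem_biUnion, Finset.mem_biUnion]
    by_cases h2 : dg H s = 2
    · rw [if_pos h2] at hcs
      exact Or.inl ⟨s, Finset.mem_filter.2 ⟨hs, h2⟩, hcs⟩
    · rw [if_neg h2] at hcs
      exact Or.inr ⟨s, Finset.mem_filter.2 ⟨hs, h2⟩, hcs⟩
  have h1 : (A.biUnion (fun s => Finset.univ.filter (fun c => Ban H D C s c))).card ≤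
      A.card * 2 := by
    apply Finset.card_biUnion_le_card_mul
    intro s hs
    rw [hA, Finset.mem_filter, mem_nb] at hs
    exact (ban_card h hs.1.2).trans ((nb_card_le_dg D s).trans hs.2.le)
  have h2 : (B.biUnion C).card ≤ B.card * N := by
    apply Finset.card_biUnion_le_card_mul
    intro s hs
    rw [h.card]
  have h3 := (Finset.card_le_card hsub).trans (Finset.card_union_le _ _)
  rcases hv with q | q
  · have : B.card = 0 := by omega
    rw [this] at h2
    omega
  · have : B.card ≤ 1 := by omega
    have : B.card * N ≤ 1 * N := Nat.mul_le_mul_right _ this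
    omega

/-- Bring in a colour outside `FB`. -/
lemma BRT {D : Finset V} {C : V → Finset (Fin (3 * N))} {v : V} (hN : 2 ≤ N)
    (h : LabOff N H D C) (hv : v ∉ D) {g p : Fin (3 * N)} (hg : Free H D C v g) (hpv : p ∉ C v)
    (hp : p ∉ FB H D C v) :
    ∃ C', LabOff N H D C' ∧ SP H D C C' ∧ C' v = insert p ((C v).erase g) ∧
      (∀ y, C' y ≠ C y → y ∉ D ∧ (y = v ∨ (H.Adj v y ∧ dg H y = 2))) := by
  obtain ⟨C', g1, g2, g3, g4⟩ := BR hN h hv hg hpv (by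
    intro s hs hsD
    rcases not_mem_FB hp hs hsD with q | q
    · exact Or.inr ⟨Or.inl q.1, q.2⟩
    · exact Or.inl q.2)
  refine ⟨C', g1, g2, g3, ?_⟩
  intro y hy
  obtain ⟨a, b⟩ := g4 y hy
  refine ⟨a, ?_⟩
  rcases b with q | q | ⟨t, q1, htD, q2, q3, q4, q5⟩
  · exact Or.inl q
  · rcases not_mem_FB hp q.1 a with r | r
    · exact Or.inr ⟨q.1, r.1⟩
    · exact absurd q.2.2 r.2
  · right
    rcases not_mem_FB hp q1 htD with r | r
    · have := q2.1; omega
    · exact absurd q3 r.2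


/-- Slots outside `D` are preserved, except those between `v` and 2-vertices. -/
def SPv (H : SimpleGraph V) (D : Finset V) (v : V) (C C' : V → Finset (Fin (3 * N))) : Prop :=
  ∀ x y, x ∉ D → y ∉ D → H.Adj x y → (x = v → dg H y ≠ 2) → (y = v → dg H x ≠ 2) →
    ∀ c, (c ∈ C x ∧ c ∈ C y) ↔ (c ∈ C' x ∧ c ∈ C' y)

lemma SP.toSPv {D : Finset V} {v : V} {C C' : V → Finset (Fin (3 * N))} (h : SP H D C C') :
    SPv H D v C C' := fun x y hx hy ha _ _ c => h x y hx hy ha c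

lemma SPv.trans {D : Finset V} {v : V} {C C' C'' : V → Finset (Fin (3 * N))}
    (h : SPv H D v C C') (h' : SPv H D v C' C'') : SPv H D v C C'' :=
  fun x y hx hy ha h1 h2 c => (h x y hx hy ha h1 h2 c).trans (h' x y hx hy ha h1 h2 c)

/-- first step: make `e` free (if present) at `v` -/
lemma A1step1 (hM : MinCE N H) {D : Finset V} {C : V → Finset (Fin (3 * N))} {v z w : V}
    (h : LabOff N H D C) (hv : Tiny1 H v) (hvD : v ∉ D) (hz : z ∈ D) (hvz : H.Adj v z)
    (hz2 : dg H z = 2) (hvw : ¬ H.Adj v w) (hne : w ≠ v) {e : Fin (3 * N)}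
    (he : ∀ x, H.Adj v x → x ∉ D → dg H x ≠ 2 → e ∈ C v → e ∉ C x) :
    ∃ C', LabOff N H D C' ∧ SPv H D v C C' ∧ C' w = C w ∧
      (∀ y, y ≠ v → dg H y ≠ 2 → C' y = C y) ∧ (e ∈ C' v → Free H D C' v e) := by
  have hN := hM.hN
  by_cases hf : e ∈ C v → Free H D C v e
  · exact ⟨C, h, (SP.refl C).toSPv, rfl, fun _ _ _ => rfl, hf⟩
  push Not at hf
  obtain ⟨hev, hnf⟩ := hf
  rw [free_iff_not_ban] at hnf
  push Not at hnf
  obtain ⟨-, y, hvy, hyD, hey⟩ := hnf hev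
  have hy2 : dg H y = 2 := by
    by_contra hh
    exact he y hvy hyD hh hev hey
  obtain ⟨t, htv, ht⟩ := other_nbr hy2 hvy.symm
  have hyt : H.Adj y t := (ht t).2 (Or.inr rfl)
  have hvt : ¬ H.Adj v t := hM.triangle hy2 hvy.symm hyt
  have hvD2 : v ∉ insert y D := by simp [hvD, hvy.ne]
  have hL2 : LabOff N H (insert y D) C := h.mono (Finset.subset_insert _ _)
  have hefree : Free H (insert y D) C v e := by
    refine ⟨hev, fun s hs hsD => ?_⟩
    simp only [Finset.mem_insert, not_or] at hsD
    exact h.ind v y s hvD hyD hsD.2 hvy hs (Ne.symm hsD.1) e hev hey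
  have hFB := FB_card hN hL2 hv (Finset.mem_insert_of_mem hz) hvz hz2
  obtain ⟨p, hp⟩ := exists_notMem (insert e (FB H (insert y D) C v ∪ C t)) (by
    refine lt_of_le_of_lt (Finset.card_insert_le _ _) ?_
    have := Finset.card_union_le (FB H (insert y D) C v) (C t)
    rw [h.card] at this
    omega)
  simp only [Finset.mem_insert, Finset.mem_union, not_or] at hp
  obtain ⟨hpe, hpF, hpt⟩ := hp
  have key : ∃ C2, LabOff N H (insert y D) C2 ∧ SP H (insert y D) C C2 ∧
      Free H (insert y D) C2 v p ∧ (∀ c, c ∈ C2 v → c = p ∨ c ∈ C v) ∧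
      (∀ s, C2 s ≠ C s → s = v ∨ (H.Adj v s ∧ dg H s = 2)) := by
    by_cases hpv : p ∈ C v
    · refine ⟨C, hL2, SP.refl C, ⟨hpv, fun s hs hsD hps => ?_⟩, fun c hc => Or.inr hc,
        fun s hs => absurd rfl hs⟩
      rcases not_mem_FB hpF hs hsD with q | q
      · exact q.2 ⟨hps, v, hs.symm, hvD2, hpv⟩
      · exact q.2 hps
    · obtain ⟨C2, g1, g2, g3, g4⟩ := BRT (by omega) hL2 hvD2 hefree hpv hpF
      refine ⟨C2, g1, g2, ?_, ?_, fun s hs => (g4 s hs).2⟩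
      · rw [free_iff_not_ban, ← g2.ban hvD2]
        exact ⟨by rw [g3]; simp, fun hb => hpv hb.1⟩
      · intro c hc
        rw [g3] at hc
        simp only [Finset.mem_insert, Finset.mem_erase] at hc
        tauto
  obtain ⟨C2, k1, k2, k3, k4, k5⟩ := key
  have hun : ∀ s, s ≠ v → (¬ H.Adj v s ∨ dg H s ≠ 2) → C2 s = C s := by
    intro s h1 h2
    by_contra hh
    rcases k5 s hh with q | q
    · exact h1 q
    · rcases h2 with r | r
      · exact r q.1
      · exact r q.2
  have hC2t : C2 t = C t := hun t htv (Or.inl hvt)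
  have hslot : ∃ e', t ∉ D → e' ∈ C y ∧ e' ∈ C t := by
    by_cases htD : t ∈ D
    · exact ⟨e, fun hh => absurd htD hh⟩
    · obtain ⟨e', a⟩ := h.ex y t hyD htD hyt
      exact ⟨e', fun _ => a⟩
  obtain ⟨e', he'⟩ := hslot
  obtain ⟨C3, m1, m2, m3, m4⟩ := INS (D := D) (y := y) (v := v) (t := t) (g := p) (e := e')
    (by omega) k1 ht htv.symm hvD k3 (fun _ => by rw [hC2t]; exact hpt) (by
      intro htD
      obtain ⟨a1, a2⟩ := he' htD
      have htD2 : t ∉ insert y D := by simp [htD, hyt.ne.symm]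
      refine ⟨⟨by rw [hC2t]; exact a2, ?_⟩, ?_⟩
      · intro s hs hsD hes
        have := (k2 t s htD2 hsD hs e').2 ⟨by rw [hC2t]; exact a2, hes⟩
        simp only [Finset.mem_insert, not_or] at hsD
        exact h.ind t y s htD hyD hsD.2 hyt.symm hs (Ne.symm hsD.1) e' a2 a1 this.2
      · intro hev'
        rcases k4 e' hev' with q | q
        · subst q; exact hpt a2
        · exact h.ind y t v hyD htD hvD hyt hvy.symm htv e' a1 a2 q)
  have hC3v : C3 v = C2 v := m2 v hvy.ne
  refine ⟨C3, m1, ?_, ?_, ?_, ?_⟩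
  ·
    intro a b ha hb hab h1 h2 c
    by_cases hay : a = y
    · subst hay
      rcases (ht b).1 hab with q | q
      · exact absurd hy2 (h2 q)
      · subst q
        obtain ⟨a1, a2⟩ := he' hb
        have a3 : e' ∈ C3 b := by rw [m2 b hyt.ne.symm, hC2t]; exact a2
        constructor
        · rintro ⟨b1, b2⟩
          rw [h.uniq a b ha hb hab c e' b1 b2 a1 a2]
          exact ⟨m4 hb, a3⟩
        · rintro ⟨b1, b2⟩
          rw [m1.uniq a b ha hb hab c e' b1 b2 (m4 hb) a3]
          exact ⟨a1, a2⟩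
    · by_cases hby : b = y
      · subst hby
        rcases (ht a).1 hab.symm with q | q
        · exact absurd hy2 (h1 q)
        · subst q
          obtain ⟨a1, a2⟩ := he' ha
          have a3 : e' ∈ C3 a := by rw [m2 a hyt.ne.symm, hC2t]; exact a2
          constructor
          · rintro ⟨b1, b2⟩
            rw [h.uniq a b ha hb hab c e' b1 b2 a2 a1]
            exact ⟨a3, m4 ha⟩
          · rintro ⟨b1, b2⟩
            rw [m1.uniq a b ha hb hab c e' b1 b2 a3 (m4 ha)]
            exact ⟨a2, a1⟩
      · rw [m2 a hay, m2 b hby]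
        exact k2 a b (by simp [hay, ha]) (by simp [hby, hb]) hab c
  · have : w ≠ y := by rintro rfl; exact hvw hvy
    rw [m2 w this, hun w hne (Or.inl hvw)]
  · intro s hs hs2
    have : s ≠ y := by rintro rfl; exact hs2 hy2
    rw [m2 s this, hun s hs (Or.inr hs2)]
  · intro hev3
    refine ⟨hev3, fun s hs hsD hes => ?_⟩
    by_cases hsy : s = y
    · subst hsy
      have := m1.uniq v s hvD hsD hs e p hev3 hes (by rw [hC3v]; exact k3.1) m3
      exact hpe this.symm
    · have hsD2 : s ∉ insert y D := by simp [hsy, hsD]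
      rw [m2 s hsy] at hes
      rw [hC3v] at hev3
      have := (k2 v s hvD2 hsD2 hs e).2 ⟨hev3, hes⟩
      exact hefree.2 s hs hsD2 this.2

/-- Insert a 2-vertex next to a tiny1 vertex with a prescribed slot at the other end. -/
lemma A1ins (hM : MinCE N H) {D : Finset V} {C : V → Finset (Fin (3 * N))} {v z w : V}
    (h : LabOff N H (insert z D) C) (hv : Tiny1 H v) (hvD : v ∉ D) (hwD : w ∉ D)
    (hz : ∀ s, H.Adj z s ↔ s = v ∨ s = w) (hne : w ≠ v)
    (hz2 : dg H z = 2) {e : Fin (3 * N)} (hew : Free H (insert z D) C w e)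
    (he : ∀ x, H.Adj v x → x ∉ D → dg H x ≠ 2 → e ∈ C v → e ∉ C x) :
    ∃ C', LabOff N H D C' ∧ SPv H (insert z D) v C C' ∧ C' w = C w ∧
      (∀ y, y ≠ v → dg H y ≠ 2 → C' y = C y) ∧ e ∈ C' z := by
  have hN := hM.hN
  have hzv : H.Adj z v := (hz v).2 (Or.inl rfl)
  have hzw : H.Adj z w := (hz w).2 (Or.inr rfl)
  have hvw : ¬ H.Adj v w := hM.triangle hz2 hzv hzw
  have hvD' : v ∉ insert z D := by simp [hvD, hzv.ne.symm]
  have hwD' : w ∉ insert z D := by simp [hwD, hzw.ne.symm]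
  have hzm : z ∈ insert z D := Finset.mem_insert_self _ _
  obtain ⟨C1, g1, g2, g3, g4, g5⟩ := A1step1 hM h hv hvD' hzm hzv.symm hz2 hvw hne (e := e) (by
    intro x hx hxD
    exact he x hx (fun hh => hxD (Finset.mem_insert_of_mem hh)))
  have step1 : ∃ C2, LabOff N H (insert z D) C2 ∧ SP H (insert z D) C1 C2 ∧ C2 w = C1 w ∧
      (∀ y, y ≠ v → dg H y ≠ 2 → C2 y = C1 y) ∧ e ∉ C2 v := by
    by_cases hev : e ∈ C1 v
    · have hFB := FB_card hN g1 hv hzm hzv.symm hz2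
      obtain ⟨p, hp⟩ := exists_notMem (FB H (insert z D) C1 v ∪ C1 v) (by
        have := Finset.card_union_le (FB H (insert z D) C1 v) (C1 v)
        rw [g1.card] at this
        omega)
      rw [Finset.mem_union, not_or] at hp
      obtain ⟨C2, k1, k2, k3, k4⟩ := BRT (by omega) g1 hvD' (g5 hev) hp.2 hp.1
      refine ⟨C2, k1, k2, ?_, ?_, ?_⟩
      · by_contra hh
        rcases (k4 w hh).2 with q | q
        · exact hne q
        · exact hvw q.1
      · intro y hy hy2
        by_contra hh
        rcases (k4 y hh).2 with q | q
        · exact hy q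
        · exact hy2 q.2
      · rw [k3]
        simp only [Finset.mem_insert, Finset.mem_erase, not_or]
        refine ⟨?_, by tauto⟩
        rintro rfl; exact hp.2 hev
    · exact ⟨C1, g1, SP.refl _, rfl, fun _ _ _ => rfl, hev⟩
  obtain ⟨C2, k1, k2, k3, k4, k5⟩ := step1
  have hC2w : C2 w = C w := k3.trans g3
  have hS2 : SPv H (insert z D) v C C2 := g2.trans k2.toSPv
  have step2 : ∃ C3 p, LabOff N H (insert z D) C3 ∧ SP H (insert z D) C2 C3 ∧ C3 w = C2 w ∧
      (∀ y, y ≠ v → dg H y ≠ 2 → C3 y = C2 y) ∧ e ∉ C3 v ∧ Free H (insert z D) C3 v p ∧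
      p ∉ C w := by
    have hFB := FB_card hN k1 hv hzm hzv.symm hz2
    obtain ⟨p, hp⟩ := exists_notMem (FB H (insert z D) C2 v ∪ C w) (by
      have := Finset.card_union_le (FB H (insert z D) C2 v) (C w)
      rw [h.card] at this
      omega)
    rw [Finset.mem_union, not_or] at hp
    by_cases hpv : p ∈ C2 v
    · refine ⟨C2, p, k1, SP.refl _, rfl, fun _ _ _ => rfl, k5, ⟨hpv, fun s hs hsD hps => ?_⟩,
        hp.2⟩
      rcases not_mem_FB hp.1 hs hsD with q | q
      · exact q.2 ⟨hps, v, hs.symm, hvD', hpv⟩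
      · exact q.2 hps
    · have hc := nb_card_succ_le (H := H) hzm hzv.symm
      have hd := hM.hdeg v
      obtain ⟨g, hg, -⟩ := exists_free k1 hvD' ∅ (by simp; omega)
      obtain ⟨C3, m1, m2, m3, m4⟩ := BRT (by omega) k1 hvD' hg hpv hp.1
      refine ⟨C3, p, m1, m2, ?_, ?_, ?_, ?_, hp.2⟩
      · by_contra hh
        rcases (m4 w hh).2 with q | q
        · exact hne q
        · exact hvw q.1
      · intro y hy hy2
        by_contra hh
        rcases (m4 y hh).2 with q | q
        · exact hy q
        · exact hy2 q.2
      · rw [m3]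
        simp only [Finset.mem_insert, Finset.mem_erase, not_or]
        refine ⟨?_, by tauto⟩
        rintro rfl; exact hp.2 hew.1
      · rw [free_iff_not_ban, ← m2.ban hvD']
        exact ⟨by rw [m3]; simp, fun hb => hpv hb.1⟩
  obtain ⟨C3, p, m1, m2, m3, m4, m5, m6, m7⟩ := step2
  have hC3w : C3 w = C w := m3.trans hC2w
  have hS3 : SPv H (insert z D) v C C3 := hS2.trans m2.toSPv
  obtain ⟨C4, n1, n2, n3, n4⟩ := INS (D := D) (y := z) (v := v) (t := w) (g := p) (e := e)
    (by omega) m1 hz hne.symm hvD m6 (fun _ => by rw [hC3w]; exact m7) (by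
      intro _
      refine ⟨⟨by rw [hC3w]; exact hew.1, fun s hs hsD hes => ?_⟩, m5⟩
      have := (hS3 w s hwD' hsD hs (fun hh => absurd hh hne) (fun hh => by
        subst hh; exact absurd hs.symm hvw) e).2 ⟨by rw [hC3w]; exact hew.1, hes⟩
      exact hew.2 s hs hsD this.2)
  refine ⟨C4, n1, ?_, ?_, ?_, n4 hwD⟩
  · intro a b ha hb hab h1 h2 c
    have haz : a ≠ z := by rintro rfl; exact ha hzm
    have hbz : b ≠ z := by rintro rfl; exact hb hzm
    rw [n2 a haz, n2 b hbz]
    exact hS3 a b ha hb hab h1 h2 c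
  · rw [n2 w hzw.ne.symm, hC3w]
  · intro y hy hy2
    have : y ≠ z := by rintro rfl; exact hy2 hz2
    rw [n2 y this, m4 y hy hy2, k4 y hy hy2, g4 y hy hy2]

lemma A1 (hM : MinCE N H) {C : V → Finset (Fin (3 * N))} {v z w : V}
    (h : LabOff N H {z} C) (hv : Tiny1 H v) (hz : ∀ s, H.Adj z s ↔ s = v ∨ s = w) (hne : w ≠ v)
    (hz2 : dg H z = 2) {e : Fin (3 * N)} (hew : Free H {z} C w e) :
    e ∈ C v ∧ ∃ x, H.Adj v x ∧ dg H x ≠ 2 ∧ e ∈ C x := by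
  by_contra hcon
  have hL : LabOff N H (insert z ∅) C := h
  obtain ⟨C', h', -⟩ := A1ins hM (D := ∅) hL hv (by simp) (by simp) hz hne hz2 hew (by
    intro x hx _ hx2 h1 h2
    exact hcon ⟨h1, x, hx, hx2, h2⟩)
  exact hM.hno C' h'

lemma A1_uniq (hM : MinCE N H) {C : V → Finset (Fin (3 * N))} {v z w : V}
    (h : LabOff N H {z} C) (hv : Tiny1 H v) (hz : ∀ s, H.Adj z s ↔ s = v ∨ s = w) (hne : w ≠ v)
    (hz2 : dg H z = 2) {e e' : Fin (3 * N)} (hew : Free H {z} C w e)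
    (hew' : Free H {z} C w e') : e = e' := by
  obtain ⟨h1, x, h2, h3, h4⟩ := A1 hM h hv hz hne hz2 hew
  obtain ⟨h1', x', h2', h3', h4'⟩ := A1 hM h hv hz hne hz2 hew'
  have := hv.uniq h2 h2' h3 h3'
  subst this
  have hzv : H.Adj z v := (hz v).2 (Or.inl rfl)
  have hxz : x ≠ z := by rintro rfl; exact h3 hz2
  exact h.uniq v x (by simpa using hzv.ne.symm) (by simpa using hxz) h2 e e' h1 h4 h1' h4'

lemma A1_deg (hM : MinCE N H) {v z w : V} (hv : Tiny1 H v)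
    (hz : ∀ s, H.Adj z s ↔ s = v ∨ s = w) (hne : w ≠ v)
    (hz2 : dg H z = 2) : dg H w = N := by
  obtain ⟨C, h⟩ := hM.hmin z (by omega)
  have hzw : H.Adj z w := (hz w).2 (Or.inr rfl)
  have hd := hM.hdeg w
  by_contra hlt
  have hc := nb_card_succ_le (H := H) (D := {z}) (v := w) (z := z) (by simp) hzw.symm
  have hwz : w ∉ ({z} : Finset V) := by simpa using hzw.ne.symm
  obtain ⟨e, he, -⟩ := exists_free h hwz ∅ (by simp; omega)
  obtain ⟨e', he', hee⟩ := exists_free h hwz {e} (by simp; omega)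
  exact hee (by rw [A1_uniq hM h hv hz hne hz2 he he']; simp)


/-- `z` is a 2-neighbour of `w` whose other neighbour is tiny1. -/
def Exit (H : SimpleGraph V) (z w : V) : Prop :=
  H.Adj z w ∧ dg H z = 2 ∧ ∃ v, v ≠ w ∧ H.Adj z v ∧ Tiny1 H v

lemma Exit.spec {z w : V} (h : Exit H z w) : ∃ v, w ≠ v ∧ Tiny1 H v ∧
    ∀ s, H.Adj z s ↔ s = v ∨ s = w := by
  obtain ⟨h1, h2, v, h3, h4, h5⟩ := h
  obtain ⟨w', h6, h7⟩ := other_nbr h2 h4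
  have : w = w' := ((h7 w).1 h1).resolve_left h3.symm
  subst this
  exact ⟨v, h6, h5, h7⟩

lemma Exit.deg (hM : MinCE N H) {z w : V} (h : Exit H z w) : dg H w = N := by
  obtain ⟨v, h1, h2, h3⟩ := h.spec
  exact A1_deg hM h2 h3 h1 h.2.1

lemma Tiny1.dg_le {v : V} (h : Tiny1 H v) : dg H v ≤ 5 := by
  rcases h with q | q <;> omega

lemma Light.dg_le {v : V} (h : Light H v) : dg H v ≤ 3 := by
  rcases h with q | q
  · omega
  · exact q.1.le

lemma two_of_light {v : V} (h : dg H v = 2) : Light H v := Or.inl h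

/-- Slots outside `D` not between a tiny1 vertex and a 2-vertex are preserved. -/
def SPt (H : SimpleGraph V) (D : Finset V) (C C' : V → Finset (Fin (3 * N))) : Prop :=
  ∀ x y, x ∉ D → y ∉ D → H.Adj x y → (Tiny1 H x → dg H y ≠ 2) → (Tiny1 H y → dg H x ≠ 2) →
    ∀ c, (c ∈ C x ∧ c ∈ C y) ↔ (c ∈ C' x ∧ c ∈ C' y)

lemma bb_pos {v z : V} (h : H.Adj v z) (hz : dg H z = 2) : 1 ≤ bb H v := by
  apply Finset.card_pos.2
  exact ⟨z, by simp [mem_nb, h, hz]⟩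

lemma bb_le (v : V) : bb H v ≤ dg H v := by have := bb_add (H := H) v; omega

/-- a 2-vertex with a 2-neighbour is tiny1 -/
lemma tiny1_of_two {v z : V} (hv : dg H v = 2) (h : H.Adj v z) (hz : dg H z = 2) :
    Tiny1 H v := by
  have h1 := bb_pos h hz
  have h2 := bb_le (H := H) v
  unfold Tiny1
  omega

lemma EXITS (hM : MinCE N H) {D : Finset V} {w : V} (hwD : w ∉ D) (n : ℕ) :
    ∀ (E : Finset V) (C : V → Finset (Fin (3 * N))) (γ : V → Fin (3 * N)), E.card = n →
    LabOff N H (E ∪ D) C → (∀ z ∈ E, Exit H z w ∧ z ∉ D) →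
    (∀ z ∈ E, ∀ z' ∈ E, γ z = γ z' → z = z') → (∀ z ∈ E, γ z ∈ C w) →
    (∀ z ∈ E, ∀ y, H.Adj w y → y ∉ E ∪ D → γ z ∉ C y) →
    (∀ z ∈ E, ∀ v, H.Adj z v → v ≠ w → v ∉ D ∧ (∀ x, H.Adj v x → x ∉ D → dg H x ≠ 2 →
      γ z ∈ C v → γ z ∉ C x)) →
    ∃ C', LabOff N H D C' ∧ SPt H (E ∪ D) C C' ∧ (∀ y, ¬ Tiny1 H y → dg H y ≠ 2 → C' y = C y) ∧
      (∀ z ∈ E, γ z ∈ C' z) := by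
  have hN := hM.hN
  induction n with
  | zero =>
    intro E C γ hE h _ _ _ _ _
    rw [Finset.card_eq_zero] at hE
    subst hE
    rw [Finset.empty_union] at h
    exact ⟨C, h, fun _ _ _ _ _ _ _ _ => Iff.rfl, fun _ _ _ => rfl, by simp⟩
  | succ n ih =>
    intro E C γ hE h hEx hinj hγw hγy hγv
    obtain ⟨z, hz⟩ := Finset.card_pos.1 (by omega : 0 < E.card)
    set E' := E.erase z with hE'
    have hEE : insert z E' = E := Finset.insert_erase hz
    have hzE' : z ∉ E' := Finset.notMem_erase _ _
    have hsub : ∀ s ∈ E', s ∈ E := fun s hs => Finset.mem_of_mem_erase hs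
    have hDD : insert z (E' ∪ D) = E ∪ D := by rw [← Finset.insert_union, hEE]
    obtain ⟨⟨v, hwv, hv1, hzadj⟩, hz2⟩ := And.intro (hEx z hz).1.spec (hEx z hz).1.2.1
    have hwN : dg H w = N := (hEx z hz).1.deg hM
    have hwE : w ∉ E := fun hh => by
      have := (hEx w hh).1.1.ne; exact this rfl
    have hwED : w ∉ E ∪ D := by simp [hwE, hwD]
    have hwED' : w ∉ E' ∪ D := by
      rw [← hDD] at hwED; exact fun hh => hwED (Finset.mem_insert_of_mem hh)
    have hzv : H.Adj z v := (hzadj v).2 (Or.inl rfl)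
    have hzw : H.Adj z w := (hzadj w).2 (Or.inr rfl)
    have hvw : ¬ H.Adj v w := hM.triangle hz2 hzv hzw
    have hvnE : ∀ a v, a ∈ E → H.Adj a v → v ≠ w → v ∉ E := by
      intro a v ha hav _ hh
      exact hM.triangle (hEx a ha).1.2.1 hav (hEx a ha).1.1 (hEx v hh).1.1
    have hvD : v ∉ E' ∪ D := by
      rw [Finset.mem_union, not_or]
      exact ⟨fun hh => hvnE z v hz hzv hwv.symm (hsub v hh), (hγv z hz v hzv hwv.symm).1⟩
    rw [← hDD] at h
    obtain ⟨C1, g1, g2, g3, g4, g5⟩ := A1ins hM h hv1 hvD hwED' hzadj hwv hz2 (e := γ z)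
      ⟨hγw z hz, fun s hs hsD => hγy z hz s hs (by rwa [hDD] at hsD)⟩ (by
        intro x hx hxD hx2
        exact (hγv z hz v hzv hwv.symm).2 x hx
          (fun hh => hxD (Finset.mem_union_right _ hh)) hx2)
    rw [hDD] at g2
    obtain ⟨C', k1, k2, k3, k4⟩ := ih E' C1 γ (by rw [hE', Finset.card_erase_of_mem hz, hE]; rfl)
      g1 (fun a ha => hEx a (hsub a ha))
      (fun a ha b hb => hinj a (hsub a ha) b (hsub b hb))
      (fun a ha => by rw [g3]; exact hγw a (hsub a ha)) (by
        intro a ha y hwy hyD hay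
        by_cases hyz : y = z
        · subst hyz
          have := g1.uniq w y hwED' hyD hwy (γ a) (γ y) (by rw [g3]; exact hγw a (hsub a ha)) hay
            (by rw [g3]; exact hγw y hz) g5
          have := hinj a (hsub a ha) y hz this
          subst this
          exact hzE' ha
        · have hyD' : y ∉ E ∪ D := by rw [← hDD, Finset.mem_insert, not_or]; exact ⟨hyz, hyD⟩
          have := (g2 w y hwED hyD' hwy (fun hh => absurd hh hwv)
            (fun hh => by subst hh; exact absurd hwy.symm hvw) (γ a)).2
              ⟨by rw [g3]; exact hγw a (hsub a ha), hay⟩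
          exact hγy a (hsub a ha) y hwy hyD' this.2) (by
        intro a ha va hava hne
        obtain ⟨b1, b2⟩ := hγv a (hsub a ha) va hava hne
        refine ⟨b1, fun x hx hxD hx2 hc1 hc2 => ?_⟩
        have hvaE : va ∉ E := hvnE a va (hsub a ha) hava hne
        have hxE : x ∉ E := fun hh => hx2 (hEx x hh).1.2.1
        have := (g2 va x (by simp [hvaE, b1]) (by simp [hxE, hxD]) hx (fun _ => hx2) (by
          intro hxv hva2
          subst hxv
          obtain ⟨y', hy1, hy2⟩ := other_nbr hva2 hx
          have ha2 := (hEx a (hsub a ha)).1.2.1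
          have hay : a = y' := ((hy2 a).1 hava.symm).resolve_left (by
            rintro rfl; exact hx2 ha2)
          subst hay
          have := A1_deg hM hv1 hy2 hy1 hva2
          omega) (γ a)).2 ⟨hc1, hc2⟩
        exact b2 x hx hxD hx2 this.1 this.2)
    refine ⟨C', k1, ?_, ?_, ?_⟩
    · intro a b ha hb hab h1 h2 c
      have hna : a ∉ E' ∪ D := by
        rw [← hDD] at ha; exact fun hh => ha (Finset.mem_insert_of_mem hh)
      have hnb : b ∉ E' ∪ D := by
        rw [← hDD] at hb; exact fun hh => hb (Finset.mem_insert_of_mem hh)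
      refine (g2 a b ha hb hab ?_ ?_ c).trans (k2 a b hna hnb hab h1 h2 c)
      · rintro rfl; exact h1 hv1
      · rintro rfl; exact h2 hv1
    · intro y hy hy2
      rw [k3 y hy hy2, g4 y (by rintro rfl; exact hy hv1) hy2]
    · intro a ha
      by_cases haz : a = z
      · subst haz
        have h7 : Tiny1 H a → dg H w ≠ 2 := by intro _; omega
        have h8 : Tiny1 H w → dg H a ≠ 2 := fun hh => by have := hh.dg_le; omega
        have haED : a ∉ E' ∪ D := by simp [hzE', (hEx a hz).2]
        exact ((k2 a w haED hwED' hzw h7 h8 (γ a)).1 ⟨g5, by rw [g3]; exact hγw a hz⟩).1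
      · exact k4 a (Finset.mem_erase.2 ⟨haz, ha⟩)

lemma Ban.mono {D D' : Finset V} {C : V → Finset (Fin (3 * N))} {t : V} {c : Fin (3 * N)}
    (hD : D ⊆ D') (h : Ban H D' C t c) : Ban H D C t c := by
  obtain ⟨h1, s, h2, h3, h4⟩ := h
  exact ⟨h1, s, h2, fun hh => h3 (hD hh), h4⟩

lemma Free.mono {D D' : Finset V} {C : V → Finset (Fin (3 * N))} {t : V} {c : Fin (3 * N)}
    (hD : D ⊆ D') (h : Free H D C t c) : Free H D' C t c :=
  ⟨h.1, fun s hs hsD => h.2 s hs (fun hh => hsD (hD hh))⟩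

lemma XCH (hM : MinCE N H) {D : Finset V} {x z0 : V} {C : V → Finset (Fin (3 * N))}
    (h : LabOff N H (insert z0 D) C) (hz0 : Exit H z0 x) (hxD : x ∉ D) (hz0D : z0 ∉ D)
    (hD : ∀ y ∈ D, ¬ Tiny1 H y) {κ f : Fin (3 * N)} (hκ : Free H (insert z0 D) C x κ)
    (hfx : f ∉ C x) (hfr : ∀ r, H.Adj x r → r ∉ D → ¬ Light H r → f ∉ C r)
    (hft : ∀ t, H.Adj x t → t ∉ D → Light H t → ¬ Exit H t x → ¬ Ban H (insert z0 D) C t f)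
    (hfv : ∀ v, H.Adj z0 v → v ≠ x → ∀ r, H.Adj v r → r ∉ D → dg H r ≠ 2 → f ∈ C v → f ∉ C r) :
    ∃ C', LabOff N H D C' ∧ SPt H (insert z0 D) C C' ∧ C' x = insert f ((C x).erase κ) ∧
      (∀ y, y ≠ x → ¬ Light H y → ¬ Tiny1 H y → C' y = C y) := by
  have hN := hM.hN
  have hxN : dg H x = N := hz0.deg hM
  have hx2 : dg H x ≠ 2 := by omega
  have hxt : ¬ Tiny1 H x := fun hh => by have := hh.dg_le; omega
  have hxl : ¬ Light H x := fun hh => by have := hh.dg_le; omega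
  set E : Finset V := Finset.univ.filter (fun z => Exit H z x ∧ z ∉ D) with hE
  have hmE : ∀ z, z ∈ E ↔ Exit H z x ∧ z ∉ D := fun z => by simp [hE]
  have hsub : insert z0 D ⊆ E ∪ D := by
    intro s hs
    rcases Finset.mem_insert.1 hs with rfl | q
    · exact Finset.mem_union_left _ ((hmE _).2 ⟨hz0, hz0D⟩)
    · exact Finset.mem_union_right _ q
  have hxE : x ∉ E := fun hh => ((hmE x).1 hh).1.1.ne rfl
  have hxED : x ∉ E ∪ D := by simp [hxE, hxD]
  have hxz0 : x ∉ insert z0 D := fun hh => hxED (hsub hh)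
  obtain ⟨C1, g1, g2, g3, g4⟩ := BR (by omega) (h.mono hsub) hxED (hκ.mono hsub) hfx (by
    intro s hs hsD
    have hsD' : s ∉ D := fun hh => hsD (Finset.mem_union_right _ hh)
    by_cases hl : Light H s
    · refine Or.inr ⟨hl.imp id (fun q => ⟨q, hx2⟩), fun hb => ?_⟩
      exact hft s hs hsD' hl (fun hh => hsD (Finset.mem_union_left _ ((hmE s).2 ⟨hh, hsD'⟩)))
        (hb.mono hsub)
    · exact Or.inl (hfr s hs hsD' hl))
  have hslot : ∃ σ : V → Fin (3 * N), ∀ z ∈ E, z ≠ z0 → σ z ∈ C z ∧ σ z ∈ C x := by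
    have : ∀ z, ∃ c, z ∈ E → z ≠ z0 → c ∈ C z ∧ c ∈ C x := by
      intro z
      by_cases hz : z ∈ E ∧ z ≠ z0
      · have hz' := (hmE z).1 hz.1
        obtain ⟨c, hc⟩ := h.ex z x (by simp [hz.2, hz'.2]) hxz0 hz'.1.1
        exact ⟨c, fun _ _ => hc⟩
      · exact ⟨f, fun h1 h2 => absurd ⟨h1, h2⟩ hz⟩
    choose σ hσ using this
    exact ⟨σ, hσ⟩
  obtain ⟨σ, hσ⟩ := hslot
  set γ : V → Fin (3 * N) := fun z => if z = z0 then f else σ z with hγ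
  have hγ0 : γ z0 = f := by simp [hγ]
  have hγ1 : ∀ z, z ≠ z0 → γ z = σ z := fun z hz => by simp [hγ, hz]
  have hmD : ∀ z ∈ E, z ≠ z0 → z ∉ insert z0 D := by
    intro z hz hne
    simp [hne, ((hmE z).1 hz).2]
  have hσκ : ∀ z ∈ E, z ≠ z0 → σ z ≠ κ := by
    intro z hz hne hh
    have := hσ z hz hne
    rw [hh] at this
    exact hκ.2 z ((hmE z).1 hz).1.1.symm (hmD z hz hne) this.1
  have hz0E : z0 ∈ E := (hmE z0).2 ⟨hz0, hz0D⟩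
  obtain ⟨C', k1, k2, k3, k4⟩ := EXITS hM hxD _ E C1 γ rfl g1
    (fun z hz => (hmE z).1 hz) (by
      intro z hz z' hz' heq
      by_cases h1 : z = z0
      · by_cases h2 : z' = z0
        · rw [h1, h2]
        · rw [h1, hγ0, hγ1 z' h2] at heq
          exact absurd (hσ z' hz' h2).2 (by rw [← heq]; exact hfx)
      · by_cases h2 : z' = z0
        · rw [h2, hγ0, hγ1 z h1] at heq
          exact absurd (hσ z hz h1).2 (by rw [heq]; exact hfx)
        · rw [hγ1 z h1, hγ1 z' h2] at heq
          by_contra hne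
          refine h.ind x z z' hxz0 (hmD z hz h1) (hmD z' hz' h2) ((hmE z).1 hz).1.1.symm
            ((hmE z').1 hz').1.1.symm hne (σ z) (hσ z hz h1).2 (hσ z hz h1).1 ?_
          rw [heq]; exact (hσ z' hz' h2).1) (by
      intro z hz
      rw [g3]
      by_cases h1 : z = z0
      · rw [h1, hγ0]; simp
      · rw [hγ1 z h1]
        simp [(hσ z hz h1).2, hσκ z hz h1]) (by
      intro z hz y hxy hyD hc
      by_cases h1 : z = z0
      · rw [h1, hγ0] at hc
        have := (g2 x y hxED hyD hxy f).2 ⟨by rw [g3]; simp, hc⟩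
        exact hfx this.1
      · rw [hγ1 z h1] at hc
        have := (g2 x y hxED hyD hxy (σ z)).2 ⟨by
          rw [g3]; simp [(hσ z hz h1).2, hσκ z hz h1], hc⟩
        have hyz : z ≠ y := by rintro rfl; exact hyD (Finset.mem_union_left _ hz)
        exact h.ind x z y hxz0 (hmD z hz h1) (fun hh => hyD (hsub hh))
          ((hmE z).1 hz).1.1.symm hxy hyz (σ z) (hσ z hz h1).2 (hσ z hz h1).1 this.2) (by
      intro z hz v hzv hvx
      have hz' := (hmE z).1 hz
      obtain ⟨v', a1, a2, a3⟩ := hz'.1.spec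
      have hvv : v = v' := ((a3 v).1 hzv).resolve_right hvx
      subst hvv
      have hvD : v ∉ D := fun hh => hD v hh a2
      have hvE : v ∉ E := by
        intro hh
        exact hM.triangle hz'.1.2.1 hzv hz'.1.1 ((hmE v).1 hh).1.1
      refine ⟨hvD, fun r hvr hrD hr2 h1 h2 => ?_⟩
      have hrE : r ∉ E := fun hh => hr2 ((hmE r).1 hh).1.2.1
      have := (g2 v r (by simp [hvD, hvE]) (by simp [hrD, hrE]) hvr (γ z)).2 ⟨h1, h2⟩
      by_cases h1 : z = z0
      · subst h1
        rw [hγ0] at this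
        exact hfv v hzv hvx r hvr hrD hr2 this.1 this.2
      · rw [hγ1 z h1] at this
        exact h.ind z x v (hmD z hz h1) hxz0 (fun hh => by
          rcases Finset.mem_insert.1 hh with q | q
          · rw [q] at hvE; exact hvE hz0E
          · exact hvD q) hz'.1.1 hzv hvx.symm (σ z) (hσ z hz h1).1 (hσ z hz h1).2 this.1)
  have hC'x : C' x = insert f ((C x).erase κ) := by rw [k3 x hxt hx2, g3]
  have hE2 : ∀ a b, a ∈ E → a ∉ insert z0 D → H.Adj a b → (Tiny1 H b → dg H a ≠ 2) →
      ∀ c, (c ∈ C a ∧ c ∈ C b) ↔ (c ∈ C' a ∧ c ∈ C' b) := by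
    intro a b ha haD hab h2 c
    have haz : a ≠ z0 := by rintro rfl; exact haD (Finset.mem_insert_self _ _)
    have ha' := (hmE a).1 ha
    obtain ⟨v, a1, a2, a3⟩ := ha'.1.spec
    rcases (a3 b).1 hab with q | q
    · rw [q] at h2; exact absurd ha'.1.2.1 (h2 a2)
    · subst q
      have s1 := hσ a ha haz
      have s2 : σ a ∈ C' a := by rw [← hγ1 a haz]; exact k4 a ha
      have s3 : σ a ∈ C' b := by rw [hC'x]; simp [s1.2, hσκ a ha haz]
      constructor
      · rintro ⟨b1, b2⟩
        rw [h.uniq a b haD hxz0 hab c (σ a) b1 b2 s1.1 s1.2]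
        exact ⟨s2, s3⟩
      · rintro ⟨b1, b2⟩
        rw [k1.uniq a b ha'.2 hxD hab c (σ a) b1 b2 s2 s3]
        exact s1
  refine ⟨C', k1, ?_, hC'x, ?_⟩
  · intro a b ha hb hab h1 h2 c
    by_cases haE : a ∈ E
    · exact hE2 a b haE ha hab h2 c
    · by_cases hbE : b ∈ E
      · have := hE2 b a hbE hb hab.symm h1 c
        rw [and_comm, this, and_comm]
      · have haD : a ∉ E ∪ D := by
          rw [Finset.mem_union, not_or]
          exact ⟨haE, fun hh => ha (Finset.mem_insert_of_mem hh)⟩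
        have hbD : b ∉ E ∪ D := by
          rw [Finset.mem_union, not_or]
          exact ⟨hbE, fun hh => hb (Finset.mem_insert_of_mem hh)⟩
        exact (g2 a b haD hbD hab c).trans (k2 a b haD hbD hab h1 h2 c)
  · intro y hy hl ht
    rw [k3 y ht (fun hh => hl (Or.inl hh))]
    by_contra hne
    rcases (g4 y hne).2 with q | q | ⟨t, q1, q0, q2, q3, q4, q5⟩
    · exact hy q
    · exact hl q.2.1
    · exact hl (Or.inl q5)

lemma LOCK (hM : MinCE N H) {x z0 : V} {C : V → Finset (Fin (3 * N))}
    (h : LabOff N H {z0} C) (hz0 : Exit H z0 x) {f : Fin (3 * N)}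
    (hfx : f ∉ C x) (hfr : ∀ r, H.Adj x r → ¬ Light H r → f ∉ C r) :
    ∃ t, H.Adj x t ∧ Light H t ∧ ¬ Exit H t x ∧ Ban H {z0} C t f := by
  by_contra hcon
  push Not at hcon
  have hN := hM.hN
  have hxz : x ∉ ({z0} : Finset V) := by simpa using hz0.1.ne.symm
  have hc := nb_card_succ_le (H := H) (D := {z0}) (v := x) (z := z0) (by simp) hz0.1.symm
  have hd := hM.hdeg x
  obtain ⟨κ, hκ, -⟩ := exists_free h hxz ∅ (by simp; omega)
  obtain ⟨v, a1, a2, a3⟩ := hz0.spec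
  obtain ⟨b1, r', b2, b3, b4⟩ := A1 hM h a2 a3 a1 hz0.2.1 hκ
  have h' : LabOff N H (insert z0 ∅) C := h
  obtain ⟨C', k1, -⟩ := XCH hM (D := ∅) h' hz0 (by simp) (by simp) (by simp) (κ := κ) (f := f) hκ
    hfx (fun r hr _ => hfr r hr) (fun t ht _ hl hne => hcon t ht hl hne) (by
      intro v' hv' hvx r hvr _ hr2 h1 h2
      have : v' = v := ((a3 v').1 hv').resolve_right hvx
      subst this
      have : r = r' := a2.uniq hvr b2 hr2 b3
      subst this
      have := h.uniq v' r (by simpa using hv'.ne.symm) (by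
        simp only [Finset.mem_singleton]; rintro rfl; exact hr2 hz0.2.1) hvr f κ h1 h2 b1 b4
      subst this
      exact hfx hκ.1)
  exact hM.hno C' k1


noncomputable def RR (H : SimpleGraph V) (x : V) : Finset V :=
  (nb H ∅ x).filter (fun s => ¬ Light H s)
/-- tiny2 neighbours -/
noncomputable def QQ (H : SimpleGraph V) (x : V) : Finset V :=
  (nb H ∅ x).filter (fun s => Tiny2 H s)
/-- non-exit 2-neighbours -/
noncomputable def MM (H : SimpleGraph V) (x : V) : Finset V :=
  (nb H ∅ x).filter (fun s => dg H s = 2 ∧ ¬ Exit H s x)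
/-- exits -/
noncomputable def EE (H : SimpleGraph V) (x : V) : Finset V :=
  (nb H ∅ x).filter (fun s => Exit H s x)

lemma mem_RR {x s : V} : s ∈ RR H x ↔ H.Adj x s ∧ ¬ Light H s := by
  simp [RR, mem_nb]
lemma mem_QQ {x s : V} : s ∈ QQ H x ↔ H.Adj x s ∧ Tiny2 H s := by
  simp [QQ, mem_nb]
lemma mem_MM {x s : V} : s ∈ MM H x ↔ H.Adj x s ∧ dg H s = 2 ∧ ¬ Exit H s x := by
  simp [MM, mem_nb]
lemma mem_EE {x s : V} : s ∈ EE H x ↔ Exit H s x := by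
  simp only [EE, Finset.mem_filter, mem_nb, Finset.notMem_empty, not_false_eq_true, and_true]
  exact ⟨fun h => h.2, fun h => ⟨h.1.symm, h⟩⟩

lemma bb_eq (x : V) : bb H x = (MM H x).card + (EE H x).card := by
  unfold bb
  rw [← Finset.card_union_of_disjoint]
  · congr 1
    ext s
    rw [Finset.mem_filter, Finset.mem_union, mem_MM, mem_EE, mem_nb]
    constructor
    · rintro ⟨⟨h1, -⟩, h2⟩
      by_cases h3 : Exit H s x
      · exact Or.inr h3
      · exact Or.inl ⟨h1, h2, h3⟩
    · rintro (h | h)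
      · exact ⟨⟨h.1, by simp⟩, h.2.1⟩
      · exact ⟨⟨h.1.symm, by simp⟩, h.2.1⟩
  · rw [Finset.disjoint_left]
    intro s h1 h2
    exact (mem_MM.1 h1).2.2 (mem_EE.1 h2)

lemma dg_eq (x : V) : dg H x = (RR H x).card + (QQ H x).card + bb H x := by
  rw [← bb_add x, add_comm (bb H x)]
  congr 1
  rw [← Finset.card_union_of_disjoint]
  · congr 1
    ext s
    rw [Finset.mem_filter, Finset.mem_union, mem_RR, mem_QQ, mem_nb]
    constructor
    · rintro ⟨⟨h1, -⟩, h2⟩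
      by_cases h3 : Tiny2 H s
      · exact Or.inr ⟨h1, h3⟩
      · exact Or.inl ⟨h1, fun h => h.elim h2 h3⟩
    · rintro (h | h)
      · exact ⟨⟨h.1, by simp⟩, fun hh => h.2 (Or.inl hh)⟩
      · exact ⟨⟨h.1, by simp⟩, by have := h.2.1; omega⟩
  · rw [Finset.disjoint_left]
    intro s h1 h2
    exact (mem_RR.1 h1).2 (Or.inr (mem_QQ.1 h2).2)

lemma ban_card_erase {D : Finset V} {C : V → Finset (Fin (3 * N))} (h : LabOff N H D C) {t x : V}
    (ht : t ∉ D) (htx : H.Adj t x) :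
    (Finset.univ.filter (fun c => c ∉ C x ∧ Ban H D C t c)).card ≤ dg H t - 1 := by
  have : Finset.univ.filter (fun c => c ∉ C x ∧ Ban H D C t c) ⊆
      ((nb H D t).erase x).biUnion (fun s => C t ∩ C s) := by
    intro c hc
    rw [Finset.mem_filter] at hc
    obtain ⟨-, h0, h1, s, h2, h3, h4⟩ := hc
    simp only [Finset.mem_biUnion, mem_nb, Finset.mem_inter, Finset.mem_erase]
    exact ⟨s, ⟨by rintro rfl; exact h0 h4, h2, h3⟩, h1, h4⟩
  refine (Finset.card_le_card this).trans ?_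
  have h1 := Finset.card_biUnion_le_card_mul ((nb H D t).erase x) (fun s => C t ∩ C s) 1 (by
      intro s hs
      rw [Finset.mem_erase, mem_nb] at hs
      rw [h.inter_card ht hs.2.2 hs.2.1])
  have h2 : ((nb H D t).erase x).card ≤ dg H t - 1 := by
    unfold dg
    rw [← Finset.card_erase_of_mem (s := nb H ∅ t) (a := x) (by simp [mem_nb, htx])]
    exact Finset.card_le_card (Finset.erase_subset_erase _ (nb_mono (Finset.empty_subset _) t))
  omega

lemma LOCK_count (hM : MinCE N H) {x z0 : V} (hz0 : Exit H z0 x) :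
    2 * N + (RR H x).card ≤ (RR H x).card * N + 2 * (QQ H x).card + (MM H x).card := by
  obtain ⟨C, h⟩ := hM.hmin z0 (by have := hz0.2.1; omega)
  have hxz : x ∉ ({z0} : Finset V) := by simpa using hz0.1.ne.symm
  have h1 := union_card h hxz (RR H x) (by
    intro s hs
    rw [mem_RR] at hs
    refine mem_nb.2 ⟨hs.1, ?_⟩
    simp only [Finset.mem_singleton]
    rintro rfl
    exact hs.2 (Or.inl hz0.2.1))
  have hcov : (Finset.univ : Finset (Fin (3 * N))) ⊆ (C x ∪ (RR H x).biUnion C) ∪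
      ((QQ H x).biUnion (fun t => Finset.univ.filter (fun c => c ∉ C x ∧ Ban H {z0} C t c)) ∪
       (MM H x).biUnion (fun t => Finset.univ.filter (fun c => c ∉ C x ∧ Ban H {z0} C t c))) := by
    intro f _
    by_cases hf : f ∈ C x ∪ (RR H x).biUnion C
    · exact Finset.mem_union_left _ hf
    · apply Finset.mem_union_right
      simp only [Finset.mem_union, Finset.mem_biUnion, not_or, not_exists, not_and] at hf
      obtain ⟨t, t1, t2, t3, t4⟩ := LOCK hM h hz0 hf.1 (fun r hr hl => hf.2 r (mem_RR.2 ⟨hr, hl⟩))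
      have : f ∈ Finset.univ.filter (fun c => c ∉ C x ∧ Ban H {z0} C t c) :=
        Finset.mem_filter.2 ⟨Finset.mem_univ _, hf.1, t4⟩
      rcases t2 with t2 | t2
      · exact Finset.mem_union_right _ (Finset.mem_biUnion.2 ⟨t, mem_MM.2 ⟨t1, t2, t3⟩, this⟩)
      · exact Finset.mem_union_left _ (Finset.mem_biUnion.2 ⟨t, mem_QQ.2 ⟨t1, t2⟩, this⟩)
  have h2 := Finset.card_le_card hcov
  rw [Finset.card_univ, Fintype.card_fin] at h2
  have h3 : ∀ t, H.Adj x t → dg H t ≠ 2 ∨ ¬ Exit H t x → t ∉ ({z0} : Finset V) := by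
    intro t _ ht
    simp only [Finset.mem_singleton]
    rintro rfl
    rcases ht with q | q
    · exact q hz0.2.1
    · exact q hz0
  have h4 : ((QQ H x).biUnion (fun t => Finset.univ.filter
      (fun c => c ∉ C x ∧ Ban H {z0} C t c))).card ≤ (QQ H x).card * 2 := by
    apply Finset.card_biUnion_le_card_mul
    intro t ht
    rw [mem_QQ] at ht
    have := ban_card_erase h (h3 t ht.1 (Or.inl (by have := ht.2.1; omega))) ht.1.symm
    have := ht.2.1
    omega
  have h5 : ((MM H x).biUnion (fun t => Finset.univ.filter
      (fun c => c ∉ C x ∧ Ban H {z0} C t c))).card ≤ (MM H x).card * 1 := by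
    apply Finset.card_biUnion_le_card_mul
    intro t ht
    rw [mem_MM] at ht
    have := ban_card_erase h (h3 t ht.1 (Or.inr ht.2.2)) ht.1.symm
    omega
  have h6 := Finset.card_union_le (C x ∪ (RR H x).biUnion C)
      ((QQ H x).biUnion (fun t => Finset.univ.filter (fun c => c ∉ C x ∧ Ban H {z0} C t c)) ∪
       (MM H x).biUnion (fun t => Finset.univ.filter (fun c => c ∉ C x ∧ Ban H {z0} C t c)))
  have h7 := Finset.card_union_le
      ((QQ H x).biUnion (fun t => Finset.univ.filter (fun c => c ∉ C x ∧ Ban H {z0} C t c)))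
       ((MM H x).biUnion (fun t => Finset.univ.filter (fun c => c ∉ C x ∧ Ban H {z0} C t c)))
  omega

/-- payers -/
def Payer (H : SimpleGraph V) (x : V) : Prop :=
  4 ≤ dg H x ∧ ¬ Tiny1 H x ∧ bb H x + (EE H x).card + (QQ H x).card + 6 ≤ 2 * dg H x

/-- the exceptional vertices -/
def XX (N : ℕ) (H : SimpleGraph V) (x : V) : Prop :=
  dg H x = N ∧ (RR H x).card = 2 ∧ (QQ H x).card = 1 ∧ (MM H x).card = 0 ∧
    4 ≤ (EE H x).card

def NX (H : SimpleGraph V) (x : V) : Prop :=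
  dg H x = 3 ∨ (dg H x = 4 ∧ (RR H x).card ≤ 1) ∨ (dg H x = 5 ∧ (RR H x).card = 0)

lemma exit_cases (hM : MinCE N H) (x : V) : (EE H x).card = 0 ∨ (dg H x = N ∧
    2 * N + (RR H x).card ≤ (RR H x).card * N + 2 * (QQ H x).card + (MM H x).card) := by
  by_cases h : (EE H x).card = 0
  · exact Or.inl h
  · obtain ⟨z, hz⟩ := Finset.card_pos.1 (Nat.pos_of_ne_zero h)
    rw [mem_EE] at hz
    exact Or.inr ⟨hz.deg hM, LOCK_count hM hz⟩

/-- the discharging inequality for vertices that are no payers -/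
lemma charge_ok (hM : MinCE N H) {x : V} (h4 : 4 ≤ dg H x) (ht : ¬ Tiny1 H x) :
    bb H x + (EE H x).card + 6 ≤ 2 * dg H x := by
  have hN := hM.hN
  have h1 := bb_eq (H := H) x
  have h2 := dg_eq (H := H) x
  rcases exit_cases hM x with h | ⟨h, h'⟩
  · unfold Tiny1 at ht
    omega
  · by_cases h0 : (RR H x).card = 0
    · rw [h0] at h'; omega
    · by_cases h0 : (RR H x).card = 1
      · rw [h0] at h'; omega
      · by_cases h0 : (RR H x).card = 2
        · rw [h0] at h'; omega
        · omega

lemma classify (hM : MinCE N H) {x v : V} (hxv : H.Adj x v) (hv : Tiny2 H v)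
    (h3 : 3 ≤ dg H x) (hp : ¬ Payer H x) : NX H x ∨ XX N H x := by
  have hN := hM.hN
  have h1 := bb_eq (H := H) x
  have h2 := dg_eq (H := H) x
  have hq : 1 ≤ (QQ H x).card := Finset.card_pos.2 ⟨v, mem_QQ.2 ⟨hxv, hv⟩⟩
  unfold NX XX
  by_cases h4 : dg H x = 3
  · exact Or.inl (Or.inl h4)
  by_cases ht : Tiny1 H x
  · unfold Tiny1 at ht
    left; omega
  have hp' : 2 * dg H x < bb H x + (EE H x).card + (QQ H x).card + 6 := by
    by_contra hh
    exact hp ⟨by omega, ht, by omega⟩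
  rcases exit_cases hM x with h | ⟨h, h'⟩
  · left; omega
  · right
    by_cases h0 : (RR H x).card = 0
    · rw [h0] at h'; omega
    · by_cases h0 : (RR H x).card = 1
      · rw [h0] at h'; omega
      · by_cases h0 : (RR H x).card = 2
        · rw [h0] at h'; omega
        · omega

/-- a tiny2 vertex and its surroundings -/
structure Cfg (H : SimpleGraph V) (u v w x y : V) : Prop where
  t2 : Tiny2 H v
  hv : ∀ s, H.Adj v s ↔ s = x ∨ s = y ∨ s = u
  hu : ∀ s, H.Adj u s ↔ s = v ∨ s = w
  hxy : x ≠ y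
  hvw : v ≠ w
  u2 : dg H u = 2
  x2 : dg H x ≠ 2
  y2 : dg H y ≠ 2
  wx : w ≠ x
  wy : w ≠ y

lemma Cfg.symm {u v w x y : V} (h : Cfg H u v w x y) : Cfg H u v w y x :=
  ⟨h.t2, fun s => by rw [h.hv]; tauto, h.hu, h.hxy.symm, h.hvw, h.u2, h.y2, h.x2, h.wy, h.wx⟩

lemma exists_cfg (hM : MinCE N H) {v : V} (hv : Tiny2 H v) : ∃ u w x y, Cfg H u v w x y := by
  obtain ⟨u, hvu, hu2⟩ := hv.exists_two
  obtain ⟨w, hwv, hu⟩ := other_nbr hu2 hvu.symm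
  obtain ⟨x, y, hxy, hxu, hyu, hvs⟩ := other_nbrs hv.1 hvu
  have huw : H.Adj u w := (hu w).2 (Or.inr rfl)
  have hvw := hM.triangle hu2 hvu.symm huw
  have hun : ∀ s, H.Adj v s → dg H s = 2 → s = u := by
    intro s hs hs2
    have := hv.2
    unfold bb at this
    have := Finset.card_le_one.1 this.le
    exact this s (by simp [mem_nb, hs, hs2]) u (by simp [mem_nb, hvu, hu2])
  have hvx : H.Adj v x := (hvs x).2 (Or.inl rfl)
  have hvy : H.Adj v y := (hvs y).2 (Or.inr (Or.inl rfl))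
  exact ⟨u, w, x, y, hv, hvs, hu, hxy, hwv.symm, hu2, fun h => hxu (hun x hvx h),
    fun h => hyu (hun y hvy h), by rintro rfl; exact hvw hvx, by rintro rfl; exact hvw hvy⟩

/-- L33 -/
lemma Cfg.dg_w (hM : MinCE N H) {u v w x y : V} (h : Cfg H u v w x y) : 4 ≤ dg H w := by
  by_contra hlt
  have hN := hM.hN
  obtain ⟨t2, hv, hu, hxy, hvw, u2, x2, y2, wx, wy⟩ := h
  have hvx : H.Adj v x := (hv x).2 (Or.inl rfl)
  have hvy : H.Adj v y := (hv y).2 (Or.inr (Or.inl rfl))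
  have hvu : H.Adj v u := (hv u).2 (Or.inr (Or.inr rfl))
  have huw : H.Adj u w := (hu w).2 (Or.inr rfl)
  have hxu : x ≠ u := by rintro rfl; exact x2 u2
  have hyu : y ≠ u := by rintro rfl; exact y2 u2
  have hwu := huw.ne.symm
  have hw1 := nb_card_succ_le (H := H) (D := {u}) (v := w) (z := u) (by simp) huw.symm
  have hwD : w ∉ ({u} : Finset V) := by simpa using hwu
  have hxD : x ∉ ({u} : Finset V) := by simpa using hxu
  have hyD : y ∉ ({u} : Finset V) := by simpa using hyu
  have hvD : v ∉ ({u} : Finset V) := by simpa using hvu.ne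
  have key : ∃ C p, LabOff N H {u} C ∧ p ∉ C x ∧ p ∉ C y ∧ p ∉ C w := by
    obtain ⟨C, h⟩ := hM.hmin u (by omega)
    by_cases hs : (C x ∪ C y)ᶜ ⊆ C w
    · have h1 := card_compl_union (h.card x) (h.card y)
      have h2 : (C x ∪ C y)ᶜ = C w := Finset.eq_of_subset_of_card_le hs (by rw [h.card]; omega)
      obtain ⟨g, hg, -⟩ := exists_free h hwD ∅ (by simp; omega)
      obtain ⟨C', k1, k2, k3, k4, -⟩ := AV2 (by omega) h hwD (by omega) hg g
      have hg1 := hg.1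
      rw [← h2] at hg1
      simp only [Finset.mem_compl, Finset.mem_union, not_or] at hg1
      exact ⟨C', g, k1, by rw [k4 x wx.symm]; exact hg1.1, by rw [k4 y wy.symm]; exact hg1.2, k3⟩
    · obtain ⟨p, hp1, hp2⟩ := Finset.not_subset.1 hs
      simp only [Finset.mem_compl, Finset.mem_union, not_or] at hp1
      exact ⟨C, p, h, hp1.1, hp1.2, hp2⟩
  obtain ⟨C, p, h, hp1, hp2, hp3⟩ := key
  obtain ⟨a, a1, a2⟩ := h.ex v x hvD hxD hvx
  obtain ⟨b, b1, b2⟩ := h.ex v y hvD hyD hvy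
  obtain ⟨e, he, hee⟩ := exists_free h hwD {a, b} (by
    have := Finset.card_le_two (a := a) (b := b); omega)
  simp only [Finset.mem_insert, Finset.mem_singleton, not_or] at hee
  have hsub : ({u} : Finset V) ⊆ insert v (insert u ∅) := by intro s; simp; tauto
  have hfr : ∀ s c, H.Adj v s → s ∉ ({u} : Finset V) → c ∈ C v → c ∈ C s →
      Free H (insert v (insert u ∅)) C s c := by
    intro s c hs hsD h1 h2
    refine ⟨h2, fun t ht htD => ?_⟩
    simp only [Finset.mem_insert, not_or] at htD
    exact h.ind s v t hsD hvD (by simpa using htD.2) hs.symm ht (Ne.symm htD.1) c h2 h1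
  obtain ⟨C', k, -⟩ := FIN (D := ∅) (by omega) (h.mono hsub) hv hu hxy hvw (by simp) (by simp)
    (hfr x a hvx hxD a1 a2) (h.ind v x y hvD hxD hyD hvx hvy hxy a a1 a2)
    (hfr y b hvy hyD b1 b2) (h.ind v y x hvD hyD hxD hvy hvx hxy.symm b b1 b2)
    hp1 hp2 hp3 (he.mono hsub) hee.1 hee.2
  exact hM.hno C' k

lemma Cfg.w_not_tiny1 (hM : MinCE N H) {u v w x y : V} (h : Cfg H u v w x y) : ¬ Tiny1 H w := by
  intro hw
  have := A1_deg hM hw (z := u) (w := v) (fun s => by rw [h.hu]; tauto) h.hvw h.u2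
  have h3 := h.t2.1
  have := hM.hN
  omega


lemma NX.dg_le {x : V} (h : NX H x) : dg H x ≤ 5 := by unfold NX at h; omega
lemma NX.le_dg {x : V} (h : NX H x) : 3 ≤ dg H x := by unfold NX at h; omega

/-- two small adjacent neighbours -/
lemma NXadj (hM : MinCE N H) {u v w x y : V} (hc : Cfg H u v w x y) (hx : dg H x ≤ 5)
    (hy : dg H y ≤ 5) (ha : H.Adj x y) : False := by
  have hN := hM.hN
  obtain ⟨t2, hv, hu, hxy, hvw, u2, x2, y2, wx, wy⟩ := hc
  have hvx : H.Adj v x := (hv x).2 (Or.inl rfl)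
  have hvy : H.Adj v y := (hv y).2 (Or.inr (Or.inl rfl))
  have hvu : H.Adj v u := (hv u).2 (Or.inr (Or.inr rfl))
  have huw : H.Adj u w := (hu w).2 (Or.inr rfl)
  have hxu : x ≠ u := by rintro rfl; exact x2 u2
  have hyu : y ≠ u := by rintro rfl; exact y2 u2
  obtain ⟨C, h0⟩ := hM.hmin v (dg_pos hvx)
  have h : LabOff N H (insert v (insert u ∅)) C := h0.mono (by simp)
  have hxD : x ∉ (insert v (insert u ∅) : Finset V) := by simp [hvx.ne.symm, hxu]
  have hyD : y ∉ (insert v (insert u ∅) : Finset V) := by simp [hvy.ne.symm, hyu]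
  have hwD : w ∉ (insert v (insert u ∅) : Finset V) := by simp [hvw.symm, huw.ne.symm]
  have nw := nb_card_succ_le (H := H) (D := insert v (insert u ∅)) (by simp) huw.symm
  have nx := nb_card_succ_le (H := H) (D := insert v (insert u ∅)) (by simp) hvx.symm
  have ny := nb_card_succ_le (H := H) (D := insert v (insert u ∅)) (by simp) hvy.symm
  have dw := hM.hdeg w
  obtain ⟨e, he, -⟩ := exists_free h hwD ∅ (by rw [Finset.card_empty]; omega)
  obtain ⟨a, ha1, ha2⟩ := exists_free h hxD {e} (by rw [Finset.card_singleton]; omega)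
  obtain ⟨b, hb1, hb2⟩ := exists_free h hyD {e} (by rw [Finset.card_singleton]; omega)
  rw [Finset.mem_singleton] at ha2 hb2
  have h1 := card_compl_union (h.card x) (h.card y)
  have h2 := h.inter_card hxD hyD ha
  obtain ⟨p, hp1, hp2⟩ : ∃ p ∈ (C x ∪ C y)ᶜ, p ∉ C w := by
    apply Finset.exists_mem_notMem_of_card_lt_card
    rw [h.card]; omega
  simp only [Finset.mem_compl, Finset.mem_union, not_or] at hp1
  obtain ⟨C', k, -⟩ := FIN (D := ∅) (by omega) h hv hu hxy hvw (by simp) (by simp)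
    ha1 (ha1.2 y ha hyD) hb1 (hb1.2 x ha.symm hxD) hp1.1 hp1.2 hp2 he (Ne.symm ha2) (Ne.symm hb2)
  exact hM.hno C' k

lemma UU_card {D : Finset V} {C : V → Finset (Fin (3 * N))} (h : LabOff N H D C) (x : V) :
    3 * N ≤ (Finset.univ.filter (fun c => UU H D C x c)).card +
      ((nb H D x).filter (fun s => ¬ Light H s)).card * N +
      ((nb H D x).filter (fun s => Light H s)).card * 3 := by
  have hcov : (Finset.univ : Finset (Fin (3 * N))) ⊆
      (Finset.univ.filter (fun c => UU H D C x c) ∪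
        ((nb H D x).filter (fun s => ¬ Light H s)).biUnion C) ∪
        ((nb H D x).filter (fun s => Light H s)).biUnion
          (fun t => Finset.univ.filter (fun c => Ban H D C t c)) := by
    intro c _
    by_contra hc
    simp only [Finset.mem_union, Finset.mem_filter, Finset.mem_univ, true_and, Finset.mem_biUnion,
      mem_nb, not_or, not_exists, not_and] at hc
    exact hc.1.1 ⟨fun r h1 h2 h3 => hc.1.2 r ⟨⟨h1, h2⟩, h3⟩, fun r h1 h2 h3 => hc.2 r ⟨⟨h1, h2⟩, h3⟩⟩
  have h1 := Finset.card_le_card hcov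
  rw [Finset.card_univ, Fintype.card_fin] at h1
  have h2 := Finset.card_union_le (Finset.univ.filter (fun c => UU H D C x c) ∪
        ((nb H D x).filter (fun s => ¬ Light H s)).biUnion C)
        (((nb H D x).filter (fun s => Light H s)).biUnion
          (fun t => Finset.univ.filter (fun c => Ban H D C t c)))
  have h3 := Finset.card_union_le (Finset.univ.filter (fun c => UU H D C x c))
        (((nb H D x).filter (fun s => ¬ Light H s)).biUnion C)
  have h4 := Finset.card_biUnion_le_card_mul ((nb H D x).filter (fun s => ¬ Light H s)) C N
    (fun s _ => (h.card s).le)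
  have h5 := Finset.card_biUnion_le_card_mul ((nb H D x).filter (fun s => Light H s))
    (fun t => Finset.univ.filter (fun c => Ban H D C t c)) 3 (by
      intro s hs
      rw [Finset.mem_filter, mem_nb] at hs
      exact (ban_card h hs.1.2).trans ((nb_card_le_dg D s).trans hs.2.dg_le))
  omega

lemma NX.UU_card {D : Finset V} {C : V → Finset (Fin (3 * N))} (h : LabOff N H D C) {x v : V}
    (hN : 7 ≤ N) (hx : NX H x) (hv : v ∈ D) (hxv : H.Adj x v) :
    N ≤ (Finset.univ.filter (fun c => UU H D C x c)).card := by
  have h1 := StrongEC.UU_card h x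
  have h2 := nb_card_succ_le hv hxv
  have h3 := Finset.card_filter_add_card_filter_not (s := nb H D x) (fun s => Light H s)
  have h4 : ((nb H D x).filter (fun s => ¬ Light H s)).card ≤ (RR H x).card :=
    Finset.card_le_card (Finset.filter_subset_filter _ (nb_mono (Finset.empty_subset _) x))
  generalize ((nb H D x).filter (fun s => ¬ Light H s)).card = r at *
  have : r = 0 ∨ r = 1 ∨ r = 2 := by unfold NX at hx; omega
  unfold NX at hx
  rcases this with rfl | rfl | rfl <;> omega

lemma UU.not_ban {D : Finset V} {C : V → Finset (Fin (3 * N))} {x : V} (hx : x ∉ D)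
    {c : Fin (3 * N)} (h : UU H D C x c) : ¬ Ban H D C x c := by
  rintro ⟨h1, s, h2, h3, h4⟩
  by_cases hl : Light H s
  · exact h.2 s h2 h3 hl ⟨h4, x, h2.symm, hx, h1⟩
  · exact h.1 s h2 h3 hl h4

lemma nb_le_ban {D : Finset V} {C : V → Finset (Fin (3 * N))} (hN : 0 < N) (h : LabOff N H D C) {x : V}
    (hx : x ∉ D) : (nb H D x).card ≤ (Finset.univ.filter (fun c => Ban H D C x c)).card := by
  have : ∀ s, ∃ c, s ∈ nb H D x → c ∈ C x ∧ c ∈ C s := by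
    intro s
    by_cases hs : s ∈ nb H D x
    · obtain ⟨c, hc⟩ := h.ex x s hx (mem_nb.1 hs).2 (mem_nb.1 hs).1
      exact ⟨c, fun _ => hc⟩
    · exact ⟨⟨0, by omega⟩, fun h => absurd h hs⟩
  choose f hf using this
  refine Finset.card_le_card_of_injOn f ?_ ?_
  · intro s hs
    have hs' := mem_nb.1 (Finset.mem_coe.1 hs)
    have := hf s hs
    simp only [Finset.coe_filter, Finset.mem_univ, true_and, Set.mem_ofPred_eq]
    exact ⟨this.1, s, hs'.1, hs'.2, this.2⟩
  · intro s hs t ht hst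
    have hs' := mem_nb.1 (Finset.mem_coe.1 hs)
    have ht' := mem_nb.1 (Finset.mem_coe.1 ht)
    by_contra hne
    exact h.ind x s t hx hs'.2 ht'.2 hs'.1 ht'.1 hne (f s) (hf s hs).1 (hf s hs).2
      (hst ▸ (hf t ht).2)

/-- two small non-adjacent neighbours -/
lemma NXnon (hM : MinCE N H) {u v w x y : V} (hc : Cfg H u v w x y) (hx : NX H x)
    (hy : NX H y) (hnxy : ¬ H.Adj x y) : False := by
  have hN := hM.hN
  have dw4 := hc.dg_w hM
  obtain ⟨t2, hv, hu, hxy, hvw, u2, x2, y2, wx, wy⟩ := hc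
  have hvx : H.Adj v x := (hv x).2 (Or.inl rfl)
  have hvy : H.Adj v y := (hv y).2 (Or.inr (Or.inl rfl))
  have hvu : H.Adj v u := (hv u).2 (Or.inr (Or.inr rfl))
  have huw : H.Adj u w := (hu w).2 (Or.inr rfl)
  have hxu : x ≠ u := by rintro rfl; exact x2 u2
  have hyu : y ≠ u := by rintro rfl; exact y2 u2
  have nux : ¬ H.Adj x u := fun h => by
    rcases (hu x).1 h.symm with h | h
    · exact hvx.ne h.symm
    · exact wx h.symm
  have nuy : ¬ H.Adj y u := fun h => by
    rcases (hu y).1 h.symm with h | h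
    · exact hvy.ne h.symm
    · exact wy h.symm
  have hwl : ¬ Light H w := fun h => by have := h.dg_le; omega
  obtain ⟨C, h0⟩ := hM.hmin v (dg_pos hvx)
  obtain ⟨D, hD⟩ : ∃ D : Finset V, D = insert v (insert u ∅) := ⟨_, rfl⟩
  have h : LabOff N H D C := h0.mono (by simp [hD])
  have hvD : v ∈ D := by simp [hD]
  have hxD : x ∉ D := by simp [hD, hvx.ne.symm, hxu]
  have hyD : y ∉ D := by simp [hD, hvy.ne.symm, hyu]
  have hwD : w ∉ D := by simp [hD, hvw.symm, huw.ne.symm]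
  have nw := nb_card_succ_le (H := H) (D := D) (by simp [hD]) huw.symm
  have nx := nb_card_succ_le (H := H) hvD hvx.symm
  have ny := nb_card_succ_le (H := H) hvD hvy.symm
  have n2 : ∀ s, H.Adj s v → ¬ H.Adj s u → dg H s ≤ (nb H D s).card + 1 := by
    intro s h1 h2
    have : (nb H ∅ s) ⊆ insert v (nb H D s) := by
      intro r hr
      rw [mem_nb] at hr
      rw [Finset.mem_insert, mem_nb]
      by_cases hrv : r = v
      · exact Or.inl hrv
      · refine Or.inr ⟨hr.1, ?_⟩
        simp only [hD, Finset.mem_insert, Finset.notMem_empty, or_false, not_or]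
        exact ⟨hrv, by rintro rfl; exact h2 hr.1⟩
    exact (Finset.card_le_card this).trans (Finset.card_insert_le _ _)
  have nx' := n2 x hvx.symm nux
  have ny' := n2 y hvy.symm nuy
  have dx := hx.dg_le
  have dy := hy.dg_le
  have dx' := hx.le_dg
  have dy' := hy.le_dg
  have dw := hM.hdeg w
  obtain ⟨Sx, hSx⟩ : ∃ S, S = Finset.univ.filter (fun c => Ban H D C x c) := ⟨_, rfl⟩
  obtain ⟨Sy, hSy⟩ : ∃ S, S = Finset.univ.filter (fun c => Ban H D C y c) := ⟨_, rfl⟩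
  obtain ⟨Ux, hUx⟩ : ∃ S, S = Finset.univ.filter (fun c => UU H D C x c) := ⟨_, rfl⟩
  obtain ⟨Uy, hUy⟩ : ∃ S, S = Finset.univ.filter (fun c => UU H D C y c) := ⟨_, rfl⟩
  have mSx : ∀ c, c ∈ Sx ↔ Ban H D C x c := by simp [hSx]
  have mSy : ∀ c, c ∈ Sy ↔ Ban H D C y c := by simp [hSy]
  have mUx : ∀ c, c ∈ Ux ↔ UU H D C x c := by simp [hUx]
  have mUy : ∀ c, c ∈ Uy ↔ UU H D C y c := by simp [hUy]
  have cSx : Sx.card ≤ (nb H D x).card := hSx ▸ ban_card h hxD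
  have cSy : Sy.card ≤ (nb H D y).card := hSy ▸ ban_card h hyD
  have cSx' : (nb H D x).card ≤ Sx.card := hSx ▸ nb_le_ban (by omega) h hxD
  have cSy' : (nb H D y).card ≤ Sy.card := hSy ▸ nb_le_ban (by omega) h hyD
  have cUx : N ≤ Ux.card := hUx ▸ hx.UU_card h hN hvD hvx.symm
  have cUy : N ≤ Uy.card := hUy ▸ hy.UU_card h hN hvD hvy.symm
  have dSx : Disjoint Sx Ux := by
    rw [Finset.disjoint_left]; intro c h1 h2; exact ((mUx c).1 h2).not_ban hxD ((mSx c).1 h1)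
  have dSy : Disjoint Sy Uy := by
    rw [Finset.disjoint_left]; intro c h1 h2; exact ((mUy c).1 h2).not_ban hyD ((mSy c).1 h1)
  obtain ⟨e, he, -⟩ := exists_free h hwD ∅ (by rw [Finset.card_empty]; omega)
  obtain ⟨a, aU, ha⟩ : ∃ a ∈ Ux, a ∉ insert e Sy := by
    apply Finset.exists_mem_notMem_of_card_lt_card
    have := Finset.card_insert_le e Sy; omega
  obtain ⟨b, bU, hb⟩ : ∃ b ∈ Uy, b ∉ insert a (insert e Sx) := by
    apply Finset.exists_mem_notMem_of_card_lt_card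
    have := Finset.card_insert_le e Sx
    have := Finset.card_insert_le a (insert e Sx); omega
  simp only [Finset.mem_insert, not_or] at ha hb
  obtain ⟨Tx, hTx1, hTx2, hTx3⟩ : ∃ T, insert a Sx ⊆ T ∧ T ⊆ Sx ∪ Ux.erase b ∧ T.card = N := by
    apply Finset.exists_subsuperset_card_eq
    · intro c hc
      rw [Finset.mem_insert] at hc
      rw [Finset.mem_union, Finset.mem_erase]
      rcases hc with rfl | hc
      · exact Or.inr ⟨Ne.symm hb.1, aU⟩
      · exact Or.inl hc
    · have := Finset.card_insert_le a Sx; omega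
    · rw [Finset.card_union_of_disjoint (dSx.mono_right (Finset.erase_subset _ _))]
      have := Finset.pred_card_le_card_erase (s := Ux) (a := b); omega
  have bTx : b ∉ Tx := fun hh => by
    have := hTx2 hh
    rw [Finset.mem_union, Finset.mem_erase] at this
    rcases this with q | q
    · exact hb.2.2 q
    · exact q.1 rfl
  obtain ⟨p, hp⟩ := exists_notMem ((Tx ∪ C w) ∪ insert b Sy) (by
    have := Finset.card_union_le (Tx ∪ C w) (insert b Sy)
    have := Finset.card_union_le Tx (C w)
    have := Finset.card_insert_le b Sy
    have := h.card w
    omega)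
  simp only [Finset.mem_insert, Finset.mem_union, not_or] at hp
  obtain ⟨⟨hpT, hpw⟩, hpb, hpS⟩ := hp
  obtain ⟨Ty, hTy1, hTy2, hTy3⟩ : ∃ T, insert b Sy ⊆ T ∧ T ⊆ Sy ∪ (Uy.erase a).erase p ∧
      T.card = N := by
    apply Finset.exists_subsuperset_card_eq
    · intro c hc
      rw [Finset.mem_insert] at hc
      rw [Finset.mem_union, Finset.mem_erase, Finset.mem_erase]
      rcases hc with rfl | hc
      · exact Or.inr ⟨Ne.symm hpb, hb.1, bU⟩
      · exact Or.inl hc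
    · have := Finset.card_insert_le b Sy; omega
    · rw [Finset.card_union_of_disjoint (dSy.mono_right ((Finset.erase_subset _ _).trans
        (Finset.erase_subset _ _)))]
      have := Finset.pred_card_le_card_erase (s := Uy) (a := a)
      have := Finset.pred_card_le_card_erase (s := Uy.erase a) (a := p); omega
  have aTy : a ∉ Ty := fun hh => by
    have := hTy2 hh
    rw [Finset.mem_union, Finset.mem_erase, Finset.mem_erase] at this
    rcases this with q | q
    · exact ha.2 q
    · exact q.2.1 rfl
  have pTy : p ∉ Ty := fun hh => by
    have := hTy2 hh
    rw [Finset.mem_union, Finset.mem_erase, Finset.mem_erase] at this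
    rcases this with q | q
    · exact hpS q
    · exact q.1 rfl
  obtain ⟨C1, l1, s1, e1, f1⟩ := RL (by omega) hxD x2 Tx hTx3 _ C h rfl
    (fun c hc => hTx1 (Finset.mem_insert_of_mem ((mSx c).2 hc)))
    (fun c hc => by
      have := hTx2 hc
      rw [Finset.mem_union, Finset.mem_erase] at this
      exact this.imp (mSx c).1 (fun q => (mUx c).1 q.2))
  have g1 : ∀ r, r ≠ x → ¬ Light H r → C1 r = C r := by
    intro r h1 h2
    by_contra hh
    rcases (f1 r hh).2 with q | q | q
    · exact h1 q
    · exact h2 q.2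
    · exact h2 (Or.inl q)
  have uy : ∀ c, UU H D C y c → UU H D C1 y c := by
    intro c hc
    refine ⟨fun r h1 h2 h3 => ?_, fun t h1 h2 h3 => ?_⟩
    · rw [g1 r (by rintro rfl; exact hnxy h1.symm) h3]
      exact hc.1 r h1 h2 h3
    · rw [← s1.ban h2]; exact hc.2 t h1 h2 h3
  obtain ⟨C2, l2, s2, e2, f2⟩ := RL (by omega) hyD y2 Ty hTy3 _ C1 l1 rfl
    (fun c hc => hTy1 (Finset.mem_insert_of_mem ((mSy c).2 ((s1.ban hyD c).2 hc))))
    (fun c hc => by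
      have := hTy2 hc
      rw [Finset.mem_union, Finset.mem_erase, Finset.mem_erase] at this
      exact this.imp (fun q => (s1.ban hyD c).1 ((mSy c).1 q)) (fun q => uy c ((mUy c).1 q.2.2)))
  have x2e : C2 x = Tx := by
    by_contra hh
    rw [← e1] at hh
    rcases (f2 x hh).2 with q | q | q
    · exact hxy q
    · exact hnxy q.1.symm
    · exact x2 q
  have w2e : C2 w = C w := by
    rw [← g1 w wx hwl]
    by_contra hh
    rcases (f2 w hh).2 with q | q | q
    · exact wy q
    · exact hwl q.2
    · exact hwl (Or.inl q)
  have s12 := s1.trans s2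
  have hna := ((mUx a).1 aU).not_ban hxD
  have hnb := ((mUy b).1 bU).not_ban hyD
  rw [s12.ban hxD] at hna
  rw [s12.ban hyD] at hnb
  have fa : Free H D C2 x a := free_iff_not_ban.2 ⟨by rw [x2e]; exact hTx1 (by simp), hna⟩
  have fb : Free H D C2 y b := free_iff_not_ban.2 ⟨by rw [e2]; exact hTy1 (by simp), hnb⟩
  have fe : Free H D C2 w e := s12.free hwD he (by rw [w2e]; exact he.1)
  rw [hD] at l2 fa fb fe
  obtain ⟨C', k, -⟩ := FIN (D := ∅) (by omega) l2 hv hu hxy hvw (by simp) (by simp)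
    fa (by rw [e2]; exact aTy) fb (by rw [x2e]; exact bTx) (by rw [x2e]; exact hpT)
    (by rw [e2]; exact pTy) (by rw [w2e]; exact hpw) fe (Ne.symm ha.1) (Ne.symm hb.2.1)
  exact hM.hno C' k


lemma Cfg.vx {u v w x y : V} (h : Cfg H u v w x y) : H.Adj v x := (h.hv x).2 (Or.inl rfl)
lemma Cfg.vy {u v w x y : V} (h : Cfg H u v w x y) : H.Adj v y := (h.hv y).2 (Or.inr (Or.inl rfl))
lemma Cfg.vu {u v w x y : V} (h : Cfg H u v w x y) : H.Adj v u := (h.hv u).2 (Or.inr (Or.inr rfl))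
lemma Cfg.uw {u v w x y : V} (h : Cfg H u v w x y) : H.Adj u w := (h.hu w).2 (Or.inr rfl)
lemma Cfg.xu {u v w x y : V} (h : Cfg H u v w x y) : ¬ H.Adj x u := fun hh => by
  rcases (h.hu x).1 hh.symm with q | q
  · exact h.vx.ne q.symm
  · exact h.wx q.symm

lemma Cfg.v_not_tiny1 {u v w x y : V} (h : Cfg H u v w x y) : ¬ Tiny1 H v := by
  have h1 := h.t2.1
  have h2 := h.t2.2
  unfold Tiny1
  omega

lemma Cfg.u_not_tiny1 (hM : MinCE N H) {u v w x y : V} (h : Cfg H u v w x y) : ¬ Tiny1 H u := by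
  have h1 := h.u2
  have h2 : bb H u = 0 := by
    unfold bb
    rw [Finset.card_eq_zero, Finset.filter_eq_empty_iff]
    intro s hs
    rw [mem_nb, h.hu] at hs
    rcases hs.1 with rfl | rfl
    · have := h.t2.1; omega
    · have := h.dg_w hM; omega
  unfold Tiny1
  omega

/-- an edge slot is free off its other endpoint -/
lemma slot_free {D D' : Finset V} {C : V → Finset (Fin (3 * N))} (h : LabOff N H D C) {x s : V}
    (hx : x ∉ D) (hs : s ∉ D) (ha : H.Adj x s) {c : Fin (3 * N)} (h1 : c ∈ C x) (h2 : c ∈ C s)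
    (hD : D ⊆ D') (hsD : s ∈ D') : Free H D' C x c :=
  ⟨h1, fun t ht htD => h.ind x s t hx hs (fun q => htD (hD q)) ha ht
    (by rintro rfl; exact htD hsD) c h1 h2⟩

lemma XX.light_eq {x v t : V} (hX : XX N H x) (hxv : H.Adj x v) (hv : Tiny2 H v)
    (ht : H.Adj x t) (hl : Light H t) (hE : ¬ Exit H t x) : t = v := by
  rcases hl with h2 | h2
  · have := Finset.card_eq_zero.1 hX.2.2.2.1
    exact absurd (mem_MM.2 ⟨ht, h2, hE⟩) (by rw [this]; simp)
  · exact Finset.card_le_one.1 hX.2.2.1.le t (mem_QQ.2 ⟨ht, h2⟩) v (mem_QQ.2 ⟨hxv, hv⟩)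

lemma LOCKX (hM : MinCE N H) {x v z0 : V} {C : V → Finset (Fin (3 * N))} (hX : XX N H x)
    (hxv : H.Adj x v) (hv : Tiny2 H v)
    (h : LabOff N H {z0} C) (hz0 : Exit H z0 x) {f : Fin (3 * N)}
    (hfx : f ∉ C x) (hfr : ∀ r, H.Adj x r → ¬ Light H r → f ∉ C r) : Ban H {z0} C v f := by
  obtain ⟨t, t1, t2, t3, t4⟩ := LOCK hM h hz0 hfx hfr
  rwa [hX.light_eq hxv hv t1 t2 t3] at t4

/-- an exceptional neighbour of a tiny2 vertex, with a labelling off an exit -/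
structure XCfg (N : ℕ) (H : SimpleGraph V) (u v w x y z0 : V) (C : V → Finset (Fin (3 * N)))
    (α β δ ε : Fin (3 * N)) : Prop where
  c : Cfg H u v w x y
  X : XX N H x
  z : Exit H z0 x
  h : LabOff N H {z0} C
  αv : α ∈ C v
  αx : α ∈ C x
  βv : β ∈ C v
  βy : β ∈ C y
  δv : δ ∈ C v
  δu : δ ∈ C u
  εu : ε ∈ C u
  εw : ε ∈ C w

section
variable {u v w x y z0 : V} {C : V → Finset (Fin (3 * N))} {α β δ ε : Fin (3 * N)}

lemma XCfg.vD (k : XCfg N H u v w x y z0 C α β δ ε) : v ∉ ({z0} : Finset V) := by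
  rw [Finset.mem_singleton]; rintro rfl; have := k.c.t2.1; have := k.z.2.1; omega
lemma XCfg.xD (k : XCfg N H u v w x y z0 C α β δ ε) : x ∉ ({z0} : Finset V) := by
  rw [Finset.mem_singleton]; rintro rfl; exact k.c.x2 k.z.2.1
lemma XCfg.yD (k : XCfg N H u v w x y z0 C α β δ ε) : y ∉ ({z0} : Finset V) := by
  rw [Finset.mem_singleton]; rintro rfl; exact k.c.y2 k.z.2.1
lemma XCfg.uD (k : XCfg N H u v w x y z0 C α β δ ε) : u ∉ ({z0} : Finset V) := by
  rw [Finset.mem_singleton]; rintro rfl; exact k.c.xu k.z.1.symm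
lemma XCfg.wD (k : XCfg N H u v w x y z0 C α β δ ε) (hM : MinCE N H) :
    w ∉ ({z0} : Finset V) := by
  rw [Finset.mem_singleton]; rintro rfl; have := k.c.dg_w hM; have := k.z.2.1; omega
lemma XCfg.xu (k : XCfg N H u v w x y z0 C α β δ ε) : x ≠ u := by
  rintro rfl; exact k.c.x2 k.c.u2
lemma XCfg.yu (k : XCfg N H u v w x y z0 C α β δ ε) : y ≠ u := by
  rintro rfl; exact k.c.y2 k.c.u2
lemma XCfg.βx (k : XCfg N H u v w x y z0 C α β δ ε) : β ∉ C x :=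
  k.h.ind v y x k.vD k.yD k.xD k.c.vy k.c.vx k.c.hxy.symm β k.βv k.βy
lemma XCfg.αy (k : XCfg N H u v w x y z0 C α β δ ε) : α ∉ C y :=
  k.h.ind v x y k.vD k.xD k.yD k.c.vx k.c.vy k.c.hxy α k.αv k.αx
lemma XCfg.δx (k : XCfg N H u v w x y z0 C α β δ ε) : δ ∉ C x :=
  k.h.ind v u x k.vD k.uD k.xD k.c.vu k.c.vx k.xu.symm δ k.δv k.δu
lemma XCfg.δy (k : XCfg N H u v w x y z0 C α β δ ε) : δ ∉ C y :=
  k.h.ind v u y k.vD k.uD k.yD k.c.vu k.c.vy k.yu.symm δ k.δv k.δu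
lemma XCfg.δw (k : XCfg N H u v w x y z0 C α β δ ε) (hM : MinCE N H) : δ ∉ C w :=
  k.h.ind u v w k.uD k.vD (k.wD hM) k.c.vu.symm k.c.uw k.c.hvw δ k.δu k.δv
lemma XCfg.εα (k : XCfg N H u v w x y z0 C α β δ ε) : ε ≠ α := by
  rintro rfl
  exact k.h.ind v x u k.vD k.xD k.uD k.c.vx k.c.vu k.xu _ k.αv k.αx k.εu
lemma XCfg.εβ (k : XCfg N H u v w x y z0 C α β δ ε) : ε ≠ β := by
  rintro rfl
  exact k.h.ind v y u k.vD k.yD k.uD k.c.vy k.c.vu k.yu _ k.βv k.βy k.εu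

/-- the FIN move off `D`, for `D` containing `z0` -/
lemma XCfg.fin (k : XCfg N H u v w x y z0 C α β δ ε) (hM : MinCE N H) {D : Finset V}
    (hD : z0 ∈ D) (hvD : v ∉ D) (hwD : w ∉ D) {b p : Fin (3 * N)}
    (hb : Free H (insert v (insert u D)) C y b) (hbx : b ∉ C x) (hbe : ε ≠ b)
    (hpx : p ∉ C x) (hpy : p ∉ C y) (hpw : p ∉ C w) :
    ∃ C', LabOff N H D C' ∧ (∀ z, z ≠ u → z ≠ v → C' z = C z) ∧ α ∈ C' v ∧ b ∈ C' v ∧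
      p ∈ C' v ∧ p ∈ C' u ∧ ε ∈ C' u := by
  have hN := hM.hN
  have hs : ({z0} : Finset V) ⊆ insert v (insert u D) := by
    intro s hs
    rw [Finset.mem_singleton] at hs
    subst hs
    simp [hD]
  exact FIN (by omega) (k.h.mono hs) k.c.hv k.c.hu k.c.hxy k.c.hvw hvD hwD
    (slot_free k.h k.xD k.vD k.c.vx.symm k.αx k.αv hs (by simp)) k.αy hb hbx hpx hpy hpw
    (slot_free k.h (k.wD hM) k.uD k.c.uw.symm k.εw k.εu hs (by simp)) k.εα hbe

lemma XCfg.fact0 (k : XCfg N H u v w x y z0 C α β δ ε) (hM : MinCE N H) :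
    (∀ r, H.Adj x r → ¬ Light H r → β ∉ C r) ∧ (∀ r, H.Adj x r → ¬ Light H r → δ ∉ C r) := by
  have h1 := union_card k.h k.xD (RR H x) (by
    intro s hs
    rw [mem_RR] at hs
    refine mem_nb.2 ⟨hs.1, ?_⟩
    rw [Finset.mem_singleton]
    rintro rfl
    exact hs.2 (Or.inl k.z.2.1))
  rw [k.X.2.1] at h1
  have h2 : (C x ∪ (RR H x).biUnion C)ᶜ ⊆ {β, δ} := by
    intro f hf
    simp only [Finset.mem_compl, Finset.mem_union, Finset.mem_biUnion, not_or, not_exists,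
      not_and] at hf
    obtain ⟨q1, s, q2, q3, q4⟩ := LOCKX hM k.X k.c.vx.symm k.c.t2 k.h k.z hf.1
      (fun r hr hl => hf.2 r (mem_RR.2 ⟨hr, hl⟩))
    rw [Finset.mem_insert, Finset.mem_singleton]
    rcases (k.c.hv s).1 q2 with rfl | rfl | rfl
    · exact absurd q4 hf.1
    · exact Or.inl (k.h.uniq v _ k.vD k.yD q2 _ _ q1 q4 k.βv k.βy)
    · exact Or.inr (k.h.uniq v _ k.vD k.uD q2 _ _ q1 q4 k.δv k.δu)
  have h3 : (C x ∪ (RR H x).biUnion C)ᶜ = {β, δ} := by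
    apply Finset.eq_of_subset_of_card_le h2
    rw [Finset.card_compl, Fintype.card_fin]
    have := Finset.card_le_two (a := β) (b := δ)
    omega
  have h4 : ∀ f ∈ ({β, δ} : Finset (Fin (3 * N))), ∀ r, H.Adj x r → ¬ Light H r → f ∉ C r := by
    intro f hf r hr hl
    rw [← h3] at hf
    simp only [Finset.mem_compl, Finset.mem_union, Finset.mem_biUnion, not_or, not_exists,
      not_and] at hf
    exact hf.2 r (mem_RR.2 ⟨hr, hl⟩)
  exact ⟨h4 β (by simp), h4 δ (by simp)⟩

lemma XCfg.r_ne (k : XCfg N H u v w x y z0 C α β δ ε) {r : V} (hr : ¬ Light H r) :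
    r ≠ u ∧ r ≠ v :=
  ⟨by rintro rfl; exact hr (Or.inl k.c.u2), by rintro rfl; exact hr (Or.inr k.c.t2)⟩

lemma XCfg.fact1 (k : XCfg N H u v w x y z0 C α β δ ε) (hM : MinCE N H) {p : Fin (3 * N)}
    (hpx : p ∉ C x) (hpy : p ∉ C y) (hpw : p ∉ C w) : p = δ := by
  by_contra hp
  obtain ⟨C', l, e, a1, a2, a3, a4, a5⟩ := k.fin hM (D := {z0}) (by simp) k.vD (k.wD hM)
    (slot_free k.h k.yD k.vD k.c.vy.symm k.βy k.βv (by intro s; simp; tauto) (by simp)) k.βx k.εβ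
    hpx hpy hpw
  obtain ⟨q1, s, q2, q3, q4⟩ := LOCKX hM k.X k.c.vx.symm k.c.t2 l k.z (f := δ)
    (by rw [e x k.xu k.c.vx.ne.symm]; exact k.δx)
    (fun r hr hl => by rw [e r (k.r_ne hl).1 (k.r_ne hl).2]; exact (k.fact0 hM).2 r hr hl)
  rcases (k.c.hv s).1 q2 with rfl | rfl | rfl
  · rw [e _ k.xu k.c.vx.ne.symm] at q4; exact k.δx q4
  · rw [e _ k.yu k.c.vy.ne.symm] at q4; exact k.δy q4
  · exact hp (l.uniq v _ k.vD k.uD q2 _ _ a3 a4 q1 q4)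

lemma XCfg.bad (k : XCfg N H u v w x y z0 C α β δ ε) (hM : MinCE N H) {c c' : Fin (3 * N)}
    (h1 : c ∈ C y) (h2 : c ∈ C x ∪ C w) (h1' : c' ∈ C y) (h2' : c' ∈ C x ∪ C w) : c = c' := by
  have hsub : (C y ∪ (C x ∪ C w))ᶜ ⊆ {δ} := by
    intro p hp
    simp only [Finset.mem_compl, Finset.mem_union, not_or] at hp
    rw [Finset.mem_singleton]
    exact k.fact1 hM hp.2.1 hp.1 hp.2.2
  have q1 := Finset.card_le_card hsub
  rw [Finset.card_compl, Fintype.card_fin, Finset.card_singleton] at q1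
  have q2 := Finset.card_union_add_card_inter (C y) (C x ∪ C w)
  have q3 := Finset.card_union_le (C x) (C w)
  have c1 := k.h.card x
  have c2 := k.h.card y
  have c3 := k.h.card w
  have hN := hM.hN
  have q4 : (C y ∩ (C x ∪ C w)).card ≤ 1 := by omega
  exact Finset.card_le_one.1 q4 c (Finset.mem_inter.2 ⟨h1, h2⟩) c' (Finset.mem_inter.2 ⟨h1', h2'⟩)

lemma XCfg.fact2 (k : XCfg N H u v w x y z0 C α β δ ε) (hM : MinCE N H) {b : Fin (3 * N)}
    (hb : Free H {z0} C y b) : b ∈ C x ∪ C w := by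
  by_contra hh
  rw [Finset.mem_union, not_or] at hh
  obtain ⟨C', l, e, a1, a2, a3, a4, a5⟩ := k.fin hM (D := {z0}) (by simp) k.vD (k.wD hM)
    (hb.mono (by intro s; simp; tauto)) hh.1 (by rintro rfl; exact hh.2 k.εw)
    k.δx k.δy (k.δw hM)
  obtain ⟨q1, -⟩ := LOCKX hM k.X k.c.vx.symm k.c.t2 l k.z (f := β)
    (by rw [e x k.xu k.c.vx.ne.symm]; exact k.βx)
    (fun r hr hl => by rw [e r (k.r_ne hl).1 (k.r_ne hl).2]; exact (k.fact0 hM).1 r hr hl)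
  have ey := e y k.yu k.c.vy.ne.symm
  have := l.uniq v y k.vD k.yD k.c.vy β b q1 (by rw [ey]; exact k.βy) a2 (by rw [ey]; exact hb.1)
  subst this
  exact hb.2 v k.c.vy.symm k.vD k.βv

end

lemma exists_XCfg (hM : MinCE N H) {u v w x y : V} (hc : Cfg H u v w x y) (hX : XX N H x) :
    ∃ z0 C α β δ ε, XCfg N H u v w x y z0 C α β δ ε := by
  obtain ⟨z0, hz0⟩ := Finset.card_pos.1 (lt_of_lt_of_le (by norm_num) hX.2.2.2.2)
  rw [mem_EE] at hz0
  obtain ⟨C, h⟩ := hM.hmin z0 (by have := hz0.2.1; omega)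
  have z2 := hz0.2.1
  have vD : v ∉ ({z0} : Finset V) := by
    rw [Finset.mem_singleton]; rintro rfl; have := hc.t2.1; omega
  have xD : x ∉ ({z0} : Finset V) := by rw [Finset.mem_singleton]; rintro rfl; exact hc.x2 z2
  have yD : y ∉ ({z0} : Finset V) := by rw [Finset.mem_singleton]; rintro rfl; exact hc.y2 z2
  have uD : u ∉ ({z0} : Finset V) := by
    rw [Finset.mem_singleton]; rintro rfl; exact hc.xu hz0.1.symm
  have wD : w ∉ ({z0} : Finset V) := by
    rw [Finset.mem_singleton]; rintro rfl; have := hc.dg_w hM; omega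
  obtain ⟨α, a1, a2⟩ := h.ex v x vD xD hc.vx
  obtain ⟨β, b1, b2⟩ := h.ex v y vD yD hc.vy
  obtain ⟨δ, d1, d2⟩ := h.ex v u vD uD hc.vu
  obtain ⟨ε, e1, e2⟩ := h.ex u w uD wD hc.uw
  exact ⟨z0, C, α, β, δ, ε, hc, hX, hz0, h, a1, a2, b1, b2, d1, d2, e1, e2⟩

lemma XXNX (hM : MinCE N H) {u v w x y : V} (hc : Cfg H u v w x y) (hX : XX N H x)
    (hy : dg H y ≤ 5) : False := by
  have hN := hM.hN
  obtain ⟨z0, C, α, β, δ, ε, k⟩ := exists_XCfg hM hc hX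
  have := nb_card_le_dg (H := H) {z0} y
  obtain ⟨b, hb, -⟩ := exists_free k.h k.yD ∅ (by rw [Finset.card_empty]; omega)
  obtain ⟨b', hb', hne⟩ := exists_free k.h k.yD {b} (by rw [Finset.card_singleton]; omega)
  rw [Finset.mem_singleton] at hne
  exact hne (k.bad hM hb'.1 (k.fact2 hM hb') hb.1 (k.fact2 hM hb))


lemma XX.not_tiny1 (hM : MinCE N H) {x : V} (h : XX N H x) : ¬ Tiny1 H x := fun hh => by
  have := hh.dg_le; have := h.1; have := hM.hN; omega
lemma XX.not_light (hM : MinCE N H) {x : V} (h : XX N H x) : ¬ Light H x := fun hh => by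
  have := hh.dg_le; have := h.1; have := hM.hN; omega

section
variable {u v w x y z0 : V} {C : V → Finset (Fin (3 * N))} {α β δ ε : Fin (3 * N)}

lemma XCfg.fact3 (k : XCfg N H u v w x y z0 C α β δ ε) (hM : MinCE N H) (hY : XX N H y)
    {z1 v1 : V} (hz1 : Exit H z1 y) (hv1 : Tiny1 H v1) (hne : y ≠ v1)
    (hz : ∀ s, H.Adj z1 s ↔ s = v1 ∨ s = y) (hv0 : v1 ≠ z0) (hz10 : z1 ≠ z0)
    {γ : Fin (3 * N)} (g1 : γ ∈ C z1) (g2 : γ ∈ C y) (gx : γ ∉ C x) (gw : γ ∉ C w) :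
    ∃ x1, H.Adj v1 x1 ∧ dg H x1 ≠ 2 ∧ β ∈ C v1 ∧ β ∈ C x1 := by
  by_contra hno
  have z2 := hz1.2.1
  have z1D : z1 ∉ ({z0} : Finset V) := by simpa using hz10
  have vz : v ≠ z1 := by rintro rfl; have := k.c.t2.1; omega
  have wz : w ≠ z1 := by rintro rfl; have := k.c.dg_w hM; omega
  have yz : y ≠ z1 := by rintro rfl; exact k.c.y2 z2
  have uz : u ≠ z1 := by rintro rfl; exact k.c.symm.xu hz1.1.symm
  have vD2 : v ∉ (insert z1 {z0} : Finset V) := by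
    rw [Finset.mem_insert, not_or]; exact ⟨vz, k.vD⟩
  have wD2 : w ∉ (insert z1 {z0} : Finset V) := by
    rw [Finset.mem_insert, not_or]; exact ⟨wz, k.wD hM⟩
  have yD2 : y ∉ (insert z1 {z0} : Finset V) := by
    rw [Finset.mem_insert, not_or]; exact ⟨yz, k.yD⟩
  have v1u : v1 ≠ u := by rintro rfl; exact k.c.u_not_tiny1 hM hv1
  have v1v : v1 ≠ v := by rintro rfl; exact k.c.v_not_tiny1 hv1
  have v1x : v1 ≠ x := by rintro rfl; exact k.X.not_tiny1 hM hv1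
  obtain ⟨C', l, e, a1, a2, a3, a4, a5⟩ := k.fin hM (D := insert z1 {z0}) (by simp) vD2 wD2
    (slot_free k.h k.yD z1D hz1.1.symm g2 g1 (by intro s; simp; tauto) (by simp)) gx
    (by rintro rfl; exact gw k.εw) k.δx k.δy (k.δw hM)
  have ey := e y k.yu k.c.vy.ne.symm
  have hβγ : β ≠ γ := by
    rintro rfl
    exact k.h.ind y v z1 k.yD k.vD z1D k.c.vy.symm hz1.1.symm vz β k.βy k.βv g1
  have hβv : β ∉ C' v := fun hh => hβγ (l.uniq v y vD2 yD2 k.c.vy β γ hh (by rw [ey]; exact k.βy)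
    a2 (by rw [ey]; exact g2))
  obtain ⟨C'', l'', -, ey'', eo, bz⟩ := A1ins hM (D := {z0}) l hv1 (by simpa using hv0) k.yD hz hne
    z2 (e := β) ⟨by rw [ey]; exact k.βy, fun s hs hsD => by
      by_cases hsv : s = v
      · rw [hsv]; exact hβv
      · have hsu : s ≠ u := by rintro rfl; exact k.c.symm.xu hs
        rw [e s hsu hsv]
        rw [Finset.mem_insert, not_or] at hsD
        exact k.h.ind y v s k.yD k.vD hsD.2 k.c.vy.symm hs (Ne.symm hsv) β k.βy k.βv⟩
    (by
      intro r hr hrD hr2 h1 h2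
      have hru : r ≠ u := by rintro rfl; exact hr2 k.c.u2
      have hrv : r ≠ v := by
        rintro rfl
        rcases (k.c.hv v1).1 hr.symm with q | q | q
        · exact v1x q
        · exact hne q.symm
        · exact v1u q
      rw [e v1 v1u v1v] at h1
      rw [e r hru hrv] at h2
      exact hno ⟨r, hr, hr2, h1, h2⟩)
  obtain ⟨q1, -⟩ := LOCKX hM k.X k.c.vx.symm k.c.t2 l'' k.z (f := β)
    (by rw [eo x v1x.symm k.c.x2, e x k.xu k.c.vx.ne.symm]; exact k.βx)
    (fun r hr hl => by
      by_cases hrv : r = v1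
      · subst hrv
        exact l''.ind z1 y r z1D k.yD (by simpa using hv0) hz1.1 ((hz r).2 (Or.inl rfl)) hne β bz
          (by rw [ey'', ey]; exact k.βy)
      · rw [eo r hrv (fun q => hl (Or.inl q)), e r (k.r_ne hl).1 (k.r_ne hl).2]
        exact (k.fact0 hM).1 r hr hl)
  rw [eo v (Ne.symm v1v) (by have := k.c.t2.1; omega)] at q1
  exact hβv q1

/-- pick a good exit at `y` -/
lemma XCfg.exists_exit (k : XCfg N H u v w x y z0 C α β δ ε) (hM : MinCE N H) (hY : XX N H y) :
    ∃ z1 γ, Exit H z1 y ∧ ¬ H.Adj z0 z1 ∧ z1 ≠ z0 ∧ γ ∈ C z1 ∧ γ ∈ C y ∧ γ ∉ C x ∧ γ ∉ C w := by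
  have h1 : 2 ≤ (EE H y \ nb H ∅ z0).card := by
    have := Finset.le_card_sdiff (nb H ∅ z0) (EE H y)
    have h2 : (nb H ∅ z0).card = 2 := k.z.2.1
    have := hY.2.2.2.2
    omega
  obtain ⟨a, ha, b, hb, hab⟩ := Finset.one_lt_card.1 (Nat.lt_of_succ_le h1)
  rw [Finset.mem_sdiff, mem_EE, mem_nb] at ha hb
  have hz : ∀ z, Exit H z y → z ≠ z0 := by
    rintro z hz rfl
    obtain ⟨v0, g1, g2, g3⟩ := k.z.spec
    rcases (g3 y).1 hz.1 with q | q
    · subst q; exact hY.not_tiny1 hM g2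
    · exact k.c.hxy q.symm
  have na := hz a ha.1
  have nb' := hz b hb.1
  have aD : a ∉ ({z0} : Finset V) := by simpa using na
  have bD : b ∉ ({z0} : Finset V) := by simpa using nb'
  obtain ⟨γ, c1, c2⟩ := k.h.ex a y aD k.yD ha.1.1
  obtain ⟨γ', c1', c2'⟩ := k.h.ex b y bD k.yD hb.1.1
  by_cases h3 : γ ∈ C x ∪ C w
  · by_cases h4 : γ' ∈ C x ∪ C w
    · have := k.bad hM c2 h3 c2' h4
      subst this
      exact absurd c1' (k.h.ind y a b k.yD aD bD ha.1.1.symm hb.1.1.symm hab γ c2 c1)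
    · rw [Finset.mem_union, not_or] at h4
      exact ⟨b, γ', hb.1, fun h => hb.2 ⟨h, by simp⟩, nb', c1', c2', h4⟩
  · rw [Finset.mem_union, not_or] at h3
    exact ⟨a, γ, ha.1, fun h => ha.2 ⟨h, by simp⟩, na, c1, c2, h3⟩

end

lemma XXXX (hM : MinCE N H) {u v w x y : V} (hc : Cfg H u v w x y) (hX : XX N H x)
    (hY : XX N H y) : False := by
  have hN := hM.hN
  obtain ⟨z0, C, α, β, δ, ε, k⟩ := exists_XCfg hM hc hX
  obtain ⟨z1, γ, hz1, h01, hz10, g1, g2, gx, gw⟩ := k.exists_exit hM hY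
  obtain ⟨v1, hne, hv1, hz⟩ := hz1.spec
  have z1v1 : H.Adj z1 v1 := (hz v1).2 (Or.inl rfl)
  have hv0 : v1 ≠ z0 := by rintro rfl; exact h01 z1v1.symm
  obtain ⟨x1, x1a, x12, x1v, x1x⟩ := k.fact3 hM hY hz1 hv1 hne hz hv0 hz10 g1 g2 gx gw
  have z2 := hz1.2.1
  have hut := hc.u_not_tiny1 hM
  have hvt := hc.v_not_tiny1
  have hwt := hc.w_not_tiny1 hM
  have hxt := hX.not_tiny1 hM
  have hyt := hY.not_tiny1 hM
  have hxl := hX.not_light hM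
  have hyl := hY.not_light hM
  have hwl : ¬ Light H w := fun h => by have := h.dg_le; have := hc.dg_w hM; omega
  have vz : v ≠ z1 := by rintro rfl; have := k.c.t2.1; omega
  have wz : w ≠ z1 := by rintro rfl; have := k.c.dg_w hM; omega
  have yz : y ≠ z1 := by rintro rfl; exact k.c.y2 z2
  have xz : x ≠ z1 := by rintro rfl; exact k.c.x2 z2
  have uz : u ≠ z1 := by rintro rfl; exact k.c.symm.xu hz1.1.symm
  have v1u : v1 ≠ u := by rintro rfl; exact hut hv1
  have x1u : x1 ≠ u := by rintro rfl; exact x12 hc.u2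
  have vnu := hc.vu.ne
  have wnu := hc.uw.ne.symm
  have nv := k.vD
  have nx := k.xD
  have ny := k.yD
  have nu := k.uD
  have nw := k.wD hM
  rw [Finset.mem_singleton] at nv nx ny nu nw
  obtain ⟨κ, hκ, -⟩ := exists_free k.h k.xD ∅ (by
    have := nb_card_succ_le (H := H) (D := {z0}) (by simp) k.z.1.symm
    have := hX.1
    rw [Finset.card_empty]; omega)
  have hs0 : ({z0} : Finset V) ⊆ insert z0 {u} := by simp
  obtain ⟨v0, v0x, v0t, hz0⟩ := k.z.spec
  obtain ⟨C1, l1, s1, e1, f1⟩ := XCH hM (D := {u}) (k.h.mono hs0) k.z (by simpa using k.xu)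
    (by simpa using Ne.symm nu) (by intro s hs; rw [Finset.mem_singleton] at hs; rw [hs]; exact hut)
    (hκ.mono hs0) (f := δ) k.δx (fun r hr _ hl => (k.fact0 hM).2 r hr hl)
    (by
      intro t ht htu htl hte
      rw [hX.light_eq hc.vx.symm hc.t2 ht htl hte]
      rintro ⟨-, s, q1, q2, q3⟩
      simp only [Finset.mem_insert, Finset.mem_singleton, not_or] at q2
      rcases (hc.hv s).1 q1 with rfl | rfl | rfl
      · exact k.δx q3
      · exact k.δy q3
      · exact q2.2 rfl)
    (by
      intro v' hv' hv'x r hr hru hr2 d1 d2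
      have : v' = v0 := ((hz0 v').1 hv').resolve_right hv'x
      subst this
      obtain ⟨q1, x', q2, q3, q4⟩ := A1 hM k.h v0t hz0 v0x k.z.2.1 hκ
      have := v0t.uniq hr q2 hr2 q3
      subst this
      have := k.h.uniq v' r (by simpa using hv'.ne.symm)
        (by rw [Finset.mem_singleton]; rintro rfl; exact hr2 k.z.2.1) hr δ κ d1 d2 q1 q4
      subst this
      exact k.δx hκ.1)
  have nm0 : ∀ {s : V}, s ≠ z0 → s ≠ u → s ∉ (insert z0 {u} : Finset V) := by
    intro s h1 h2; simp [h1, h2]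
  have nm1 : ∀ {s : V}, s ≠ z1 → s ≠ u → s ∉ (insert z1 {u} : Finset V) := by
    intro s h1 h2; simp [h1, h2]
  have nmu : ∀ {s : V}, s ≠ u → s ∉ ({u} : Finset V) := by
    intro s h1; simp [h1]
  have C1y : C1 y = C y := f1 y hc.hxy.symm hyl hyt
  have C1w : C1 w = C w := f1 w hc.wx hwl hwt
  have a1 := (s1 v x (nm0 nv vnu) (nm0 nx k.xu) hc.vx (fun h => absurd h hvt)
    (fun h => absurd h hxt) α).1 ⟨k.αv, k.αx⟩
  have b1 := (s1 v y (nm0 nv vnu) (nm0 ny k.yu) hc.vy (fun h => absurd h hvt)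
    (fun h => absurd h hyt) β).1 ⟨k.βv, k.βy⟩
  have c1 := (s1 y z1 (nm0 ny k.yu) (nm0 hz10 uz.symm) hz1.1.symm (fun h => absurd h hyt)
    (fun _ => hc.y2) γ).1 ⟨g2, g1⟩
  have x1t : Tiny1 H x1 → dg H v1 ≠ 2 := by
    intro h1 h2
    obtain ⟨t, t1, t2⟩ := other_nbr h2 x1a
    have hx1z1 : x1 ≠ z1 := by rintro rfl; exact x12 z2
    have : z1 = t := ((t2 z1).1 z1v1.symm).resolve_left hx1z1.symm
    subst this
    have := A1_deg hM h1 t2 t1 h2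
    omega
  have d1 := (s1 v1 x1 (nm0 hv0 v1u) (nm0 (by rintro rfl; exact x12 k.z.2.1) x1u) x1a
    (fun _ => x12) x1t β).1 ⟨x1v, x1x⟩
  have hs1 : ({u} : Finset V) ⊆ insert z1 {u} := by simp
  obtain ⟨f, fα, fy, fr⟩ := exists_spare l1 (nmu k.yu) (RR H y) (by
    intro s hs
    rw [mem_RR] at hs
    exact mem_nb.2 ⟨hs.1, nmu (by rintro rfl; exact hc.symm.xu hs.1)⟩) hY.2.1.le (by omega) α
  obtain ⟨C2, l2, s2, e2, f2⟩ := XCH hM (D := {u}) (l1.mono hs1) hz1 (nmu k.yu)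
    (nmu uz.symm) (by intro s hs; rw [Finset.mem_singleton] at hs; rw [hs]; exact hut)
    (slot_free l1 (nmu k.yu) (nmu uz.symm) hz1.1.symm c1.1 c1.2 hs1 (by simp)) (f := f) fy
    (fun r hr _ hl => fr r (mem_RR.2 ⟨hr, hl⟩))
    (by
      intro t ht htu htl hte
      rw [hY.light_eq hc.vy.symm hc.t2 ht htl hte]
      rintro ⟨q0, s, q1, q2, q3⟩
      simp only [Finset.mem_insert, Finset.mem_singleton, not_or] at q2
      rcases (hc.hv s).1 q1 with rfl | rfl | rfl
      · exact fα (l1.uniq v _ (nmu vnu) (nmu k.xu) q1 _ _ q0 q3 a1.1 a1.2)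
      · exact fy q3
      · exact q2.2 rfl)
    (by
      intro v' hv' hv'y r hr hru hr2 q1 q2
      have : v' = v1 := ((hz v').1 hv').resolve_right hv'y
      subst this
      have := hv1.uniq hr x1a hr2 x12
      subst this
      have := l1.uniq v' r (nmu v1u) (nmu x1u) hr f β q1 q2 d1.1 d1.2
      subst this
      exact fy b1.2)
  have C2x : C2 x = C1 x := f2 x hc.hxy hxl hxt
  have C2w : C2 w = C w := by rw [f2 w hc.wy hwl hwt, C1w]
  have a2 := (s2 v x (nm1 vz vnu) (nm1 xz k.xu) hc.vx (fun h => absurd h hvt)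
    (fun h => absurd h hxt) α).1 a1
  have b2 := (s2 v y (nm1 vz vnu) (nm1 yz k.yu) hc.vy (fun h => absurd h hvt)
    (fun h => absurd h hyt) β).1 b1
  have hsu : ({u} : Finset V) ⊆ insert v (insert u ∅) := by simp
  have fe : Free H (insert v (insert u ∅)) C2 w ε := by
    refine ⟨by rw [C2w]; exact k.εw, fun s hs hsD he => ?_⟩
    simp only [Finset.mem_insert, Finset.notMem_empty, or_false, not_or] at hsD
    have sz0 : s ≠ z0 := by
      rintro rfl
      rcases (hz0 w).1 hs.symm with q | q
      · subst q; exact hwt v0t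
      · exact hc.wx q
    have sz1 : s ≠ z1 := by
      rintro rfl
      rcases (hz w).1 hs.symm with q | q
      · subst q; exact hwt hv1
      · exact hc.wy q
    have w2 : dg H w ≠ 2 := fun h => hwl (Or.inl h)
    have r1 := (s2 w s (nm1 wz wnu) (nm1 sz1 hsD.2) hs (fun h => absurd h hwt) (fun _ => w2) ε).2
      ⟨by rw [C2w]; exact k.εw, he⟩
    have r0 := (s1 w s (nm0 nw wnu) (nm0 sz0 hsD.2) hs (fun h => absurd h hwt) (fun _ => w2) ε).2 r1
    exact k.h.ind w u s (k.wD hM) k.uD (by simpa using sz0) hc.uw.symm hs (Ne.symm hsD.2) ε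
      k.εw k.εu r0.2
  obtain ⟨C', kk, -⟩ := FIN (D := ∅) (by omega) (l2.mono hsu) hc.hv hc.hu hc.hxy hc.hvw (by simp)
    (by simp) (slot_free l2 (nmu k.xu) (nmu vnu) hc.vx.symm a2.2 a2.1 hsu (by simp))
    (l2.ind v x y (nmu vnu) (nmu k.xu) (nmu k.yu) hc.vx hc.vy hc.hxy α a2.1 a2.2)
    (slot_free l2 (nmu k.yu) (nmu vnu) hc.vy.symm b2.2 b2.1 hsu (by simp))
    (l2.ind v y x (nmu vnu) (nmu k.yu) (nmu k.xu) hc.vy hc.vx hc.hxy.symm β b2.1 b2.2)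
    (p := γ) (e := ε)
    (by
      rw [C2x, e1]
      simp only [Finset.mem_insert, Finset.mem_erase, not_or, not_and]
      exact ⟨by rintro rfl; exact k.δy g2, fun _ => gx⟩)
    (by
      rw [e2]
      simp only [Finset.mem_insert, Finset.mem_erase, not_or, not_and]
      exact ⟨by rintro rfl; exact fy c1.1, fun h => absurd rfl h⟩)
    (by rw [C2w]; exact gw) fe k.εα k.εβ
  exact hM.hno C' kk

lemma K1 (hM : MinCE N H) {v : V} (hv : Tiny2 H v) : ∃ x, H.Adj v x ∧ Payer H x := by
  obtain ⟨u, w, x, y, hc⟩ := exists_cfg hM hv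
  by_contra hno
  have hx : ¬ Payer H x := fun h => hno ⟨x, hc.vx, h⟩
  have hy : ¬ Payer H y := fun h => hno ⟨y, hc.vy, h⟩
  have dx : 3 ≤ dg H x := by have := hM.two_le hc.vx.symm; have := hc.x2; omega
  have dy : 3 ≤ dg H y := by have := hM.two_le hc.vy.symm; have := hc.y2; omega
  rcases classify hM hc.vx.symm hv dx hx with h1 | h1
  · rcases classify hM hc.vy.symm hv dy hy with h2 | h2
    · by_cases ha : H.Adj x y
      · exact NXadj hM hc h1.dg_le h2.dg_le ha
      · exact NXnon hM hc h1 h2 ha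
    · exact XXNX hM hc.symm h2 h1.dg_le
  · rcases classify hM hc.vy.symm hv dy hy with h2 | h2
    · exact XXNX hM hc h1 h2.dg_le
    · exact XXXX hM hc h1 h2


/-- the amount of charge sent from `x` to `z` -/
noncomputable def pay (H : SimpleGraph V) (x z : V) : ℕ :=
  (if H.Adj x z ∧ dg H z = 2 ∧ ¬ Tiny1 H x then 1 else 0) +
  (if Exit H z x ∧ ¬ Tiny1 H x then 1 else 0) +
  (if (H.Adj x z ∧ Tiny2 H z) ∧ Payer H x then 1 else 0)

lemma pay_out (x : V) : ∑ z, pay H x z =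
    (if Tiny1 H x then 0 else bb H x + (EE H x).card) + (if Payer H x then (QQ H x).card else 0) := by
  have e1 : Finset.univ.filter (fun z => H.Adj x z ∧ dg H z = 2) =
      (nb H ∅ x).filter (fun s => dg H s = 2) := by ext s; simp [mem_nb]
  have e2 : Finset.univ.filter (fun z => Exit H z x) = EE H x := by ext s; simp [mem_EE]
  have e3 : Finset.univ.filter (fun z => H.Adj x z ∧ Tiny2 H z) = QQ H x := by
    ext s; simp [mem_QQ]
  unfold pay
  rw [Finset.sum_add_distrib, Finset.sum_add_distrib]
  unfold bb
  rw [← e1, ← e2, ← e3]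
  by_cases h1 : Tiny1 H x <;> by_cases h2 : Payer H x <;> simp [h1, h2]

lemma MinCE.two_le' (hM : MinCE N H) {v : V} (h : 0 < dg H v) : 2 ≤ dg H v := by
  obtain ⟨s, hs⟩ := Finset.card_pos.1 h
  exact hM.two_le (mem_nb.1 hs).1

lemma EE_card_zero (hM : MinCE N H) {v : V} (h : dg H v ≤ 6) : (EE H v).card = 0 := by
  have := hM.hN
  rcases exit_cases hM v with q | q
  · exact q
  · omega

lemma pay_two (hM : MinCE N H) {v : V} (h2 : dg H v = 2) : 2 ≤ ∑ x, pay H x v := by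
  have hN := hM.hN
  obtain ⟨a, ha⟩ := exists_nbr (n := 1) h2
  obtain ⟨b, hba, hv⟩ := other_nbr h2 ha
  have hb : H.Adj v b := (hv b).2 (Or.inr rfl)
  have key : ∀ p q, H.Adj v p → H.Adj v q → q ≠ p → Tiny1 H p → 2 ≤ ∑ x, pay H x v := by
    intro p q hp hq hne ht
    have hE : Exit H v q := ⟨hq, h2, p, hne.symm, hp, ht⟩
    have hqt : ¬ Tiny1 H q := fun h => by have := h.dg_le; have := hE.deg hM; omega
    have h1 : 2 ≤ pay H q v := by
      unfold pay
      rw [if_pos ⟨hq.symm, h2, hqt⟩, if_pos ⟨hE, hqt⟩]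
      omega
    exact h1.trans (Finset.single_le_sum (f := fun x => pay H x v) (fun _ _ => Nat.zero_le _)
      (Finset.mem_univ q))
  by_cases h3 : Tiny1 H a
  · exact key a b ha hb hba h3
  by_cases h4 : Tiny1 H b
  · exact key b a hb ha hba.symm h4
  have p1 : 1 ≤ pay H a v := by
    unfold pay
    rw [if_pos ⟨ha.symm, h2, h3⟩]; omega
  have p2 : 1 ≤ pay H b v := by
    unfold pay
    rw [if_pos ⟨hb.symm, h2, h4⟩]; omega
  have h5 : ∑ x ∈ {a, b}, pay H x v ≤ ∑ x, pay H x v :=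
    Finset.sum_le_sum_of_subset (Finset.subset_univ _)
  rw [Finset.sum_pair hba.symm] at h5
  omega

lemma pay_tiny2 (hM : MinCE N H) {v : V} (h2 : Tiny2 H v) : 1 ≤ ∑ x, pay H x v := by
  obtain ⟨x, hx, hp⟩ := K1 hM h2
  have h1 : 1 ≤ pay H x v := by
    unfold pay
    rw [if_pos (c := (H.Adj x v ∧ Tiny2 H v) ∧ Payer H x) ⟨⟨hx.symm, h2⟩, hp⟩]
    omega
  exact h1.trans (Finset.single_le_sum (f := fun x => pay H x v) (fun _ _ => Nat.zero_le _)
    (Finset.mem_univ x))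

lemma local_charge (hM : MinCE N H) {v : V} (h : 0 < dg H v) :
    6 + ∑ z, pay H v z ≤ 2 * dg H v + ∑ x, pay H x v := by
  have hd := hM.two_le' h
  rw [pay_out]
  have hE := bb_eq (H := H) v
  by_cases h2 : dg H v = 2
  · have h3 := pay_two hM h2
    have h4 := EE_card_zero hM (v := v) (by omega)
    have hp : ¬ Payer H v := fun q => by have := q.1; omega
    rw [if_neg hp]
    by_cases ht : Tiny1 H v
    · rw [if_pos ht]; omega
    · rw [if_neg ht]
      have := bb_le (H := H) v
      unfold Tiny1 at ht
      omega
  by_cases h3 : dg H v = 3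
  · have h4 := EE_card_zero hM (v := v) (by omega)
    have hp : ¬ Payer H v := fun q => by have := q.1; omega
    rw [if_neg hp]
    by_cases ht : Tiny1 H v
    · rw [if_pos ht]; omega
    · rw [if_neg ht]
      by_cases ht2 : Tiny2 H v
      · have := pay_tiny2 hM ht2
        have := ht2.2
        omega
      · have := bb_le (H := H) v
        unfold Tiny1 at ht
        unfold Tiny2 at ht2
        omega
  by_cases ht : Tiny1 H v
  · have hp : ¬ Payer H v := fun q => q.2.1 ht
    rw [if_neg hp, if_pos ht]; omega
  · rw [if_neg ht]
    by_cases hp : Payer H v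
    · rw [if_pos hp]; have := hp.2.2; omega
    · rw [if_neg hp]; have := charge_ok hM (x := v) (by omega) ht; omega

lemma pay_adj {x z : V} (h : ¬ H.Adj x z) : pay H x z = 0 := by
  unfold pay
  rw [if_neg (fun q => h q.1), if_neg (fun q => h q.1.1.symm), if_neg (fun q => h q.1.1)]

lemma discharge (hM : MinCE N H) :
    3 * (Finset.univ.filter (fun v => 0 < dg H v)).card ≤ ∑ v, dg H v := by
  have h1 : ∀ v, (if 0 < dg H v then 6 else 0) + ∑ z, pay H v z ≤
      2 * dg H v + ∑ x, pay H x v := by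
    intro v
    by_cases h : 0 < dg H v
    · rw [if_pos h]; exact local_charge hM h
    · rw [if_neg h]
      have : ∑ z, pay H v z = 0 := Finset.sum_eq_zero (fun z _ => pay_adj (fun q => h (dg_pos q)))
      omega
  have h2 := Finset.sum_le_sum (fun v (_ : v ∈ Finset.univ) => h1 v)
  rw [Finset.sum_add_distrib, Finset.sum_add_distrib, Finset.sum_comm (f := fun v x => pay H x v),
    ← Finset.mul_sum, ← Finset.sum_filter, Finset.sum_const, smul_eq_mul] at h2
  omega

lemma dg_eq_degree (H : SimpleGraph V) (v : V) : dg H v = H.degree v := by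
  unfold dg
  rw [← SimpleGraph.card_neighborFinset_eq_degree]
  congr 1
  ext s
  simp [mem_nb]

/-- every minimal counterexample is dense -/
lemma MinCE.dense (hM : MinCE N H) : ∃ A : Finset V, A.Nonempty ∧
    (∀ e ∈ H.edgeSet, ∀ v ∈ e, v ∈ A) ∧ 3 * A.card ≤ 2 * H.edgeSet.ncard := by
  refine ⟨Finset.univ.filter (fun v => 0 < dg H v), ?_, ?_, ?_⟩
  · by_contra hne
    rw [Finset.not_nonempty_iff_eq_empty, Finset.filter_eq_empty_iff] at hne
    have hna : ∀ x y, ¬ H.Adj x y := fun x y h => hne (Finset.mem_univ x) (dg_pos h)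
    obtain ⟨K, -, hK⟩ := Finset.exists_subset_card_eq
      (s := (Finset.univ : Finset (Fin (3 * N)))) (n := N) (by simp; omega)
    exact hM.hno (fun _ => K) ⟨fun _ => hK, fun x y _ _ h => absurd h (hna x y),
      fun x y _ _ h => absurd h (hna x y), fun x y _ _ _ _ h => absurd h (hna _ _)⟩
  · intro e he v hv
    induction e with
    | _ a b =>
      rw [SimpleGraph.mem_edgeSet] at he
      rw [Finset.mem_filter]
      refine ⟨Finset.mem_univ _, ?_⟩
      rcases Sym2.mem_iff.1 hv with rfl | rfl
      · exact dg_pos he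
      · exact dg_pos he.symm
  · have h1 := discharge hM
    simp only [dg_eq_degree] at h1 ⊢
    rw [SimpleGraph.sum_degrees_eq_twice_card_edges] at h1
    rwa [← SimpleGraph.coe_edgeFinset, Set.ncard_coe_finset]

lemma exists_minCE {G : SimpleGraph V} (hN : 7 ≤ N) (hdeg : ∀ v, dg G v ≤ N)
    (hno : ∀ C, ¬ LabOff N G ∅ C) : ∃ H, H ≤ G ∧ MinCE N H := by
  obtain ⟨H, ⟨hHG, hHno⟩, hmin⟩ := (wellFounded_lt (α := SimpleGraph V)).has_min
    {H | H ≤ G ∧ ∀ C, ¬ LabOff N H ∅ C} ⟨G, le_rfl, hno⟩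
  refine ⟨H, hHG, hN, fun v => ?_, hHno, fun u hu => ?_⟩
  · refine le_trans (Finset.card_le_card ?_) (hdeg v)
    intro s hs
    rw [mem_nb] at hs ⊢
    exact ⟨hHG hs.1, hs.2⟩
  · let H' : SimpleGraph V :=
      { Adj := fun a b => H.Adj a b ∧ a ≠ u ∧ b ≠ u
        symm := ⟨fun a b h => ⟨h.1.symm, h.2.2, h.2.1⟩⟩
        loopless := ⟨fun a h => h.1.ne rfl⟩ }
    have hle : H' ≤ H := fun a b h => h.1
    have hlt : H' < H := by
      refine lt_of_le_of_ne hle fun heq => ?_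
      obtain ⟨s, hs⟩ := Finset.card_pos.1 hu
      have h1 := (mem_nb.1 hs).1
      rw [← heq] at h1
      exact h1.2.1 rfl
    by_contra hC
    refine hmin H' ⟨hle.trans hHG, fun C h => hC ⟨C, ?_⟩⟩ hlt
    simp only [Finset.mem_singleton, not_exists] at *
    refine ⟨h.card, ?_, ?_, ?_⟩
    · intro x y hx hy ha
      rw [Finset.mem_singleton] at hx hy
      exact h.ex x y (by simp) (by simp) ⟨ha, hx, hy⟩
    · intro x y hx hy ha
      rw [Finset.mem_singleton] at hx hy
      exact h.uniq x y (by simp) (by simp) ⟨ha, hx, hy⟩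
    · intro v x y hv hx hy a1 a2
      rw [Finset.mem_singleton] at hv hx hy
      exact h.ind v x y (by simp) (by simp) (by simp) ⟨a1, hv, hx⟩ ⟨a2, hv, hy⟩


lemma LabOff.strong {G : SimpleGraph V} (hN : 0 < N) {C : V → Finset (Fin (3 * N))}
    (h : LabOff N G ∅ C) : HasStrongColoring G (3 * N) := by
  have hex : ∀ e : Sym2 V, ∃ c : Fin (3 * N), e ∈ G.edgeSet → ∀ v ∈ e, c ∈ C v := by
    intro e
    by_cases he : e ∈ G.edgeSet
    · induction e with
      | _ a b =>
        obtain ⟨c, h1, h2⟩ := h.ex a b (by simp) (by simp) he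
        refine ⟨c, fun _ v hv => ?_⟩
        rcases Sym2.mem_iff.1 hv with rfl | rfl
        · exact h1
        · exact h2
    · exact ⟨⟨0, by omega⟩, fun q => absurd q he⟩
  choose k hk using hex
  have share : ∀ e ∈ G.edgeSet, ∀ e' ∈ G.edgeSet, e ≠ e' → ∀ v, v ∈ e → v ∈ e' → k e ≠ k e' := by
    intro e he e' he' hne v hv hv' hkk
    obtain ⟨x, rfl⟩ := Sym2.mem_iff_exists.1 hv
    obtain ⟨y, rfl⟩ := Sym2.mem_iff_exists.1 hv'
    have hxy : x ≠ y := by rintro rfl; exact hne rfl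
    refine h.ind v x y (by simp) (by simp) (by simp) he he' hxy (k s(v, x))
      (hk _ he v (by simp)) (hk _ he x (by simp)) ?_
    rw [hkk]
    exact hk _ he' y (by simp)
  refine ⟨k, fun e he e' he' hc => ?_⟩
  obtain ⟨hne, ⟨v, hv, hv'⟩ | ⟨f, hf, ⟨v, hv, hvf⟩, w, hw, hwf⟩⟩ := hc
  · exact share e he e' he' hne v hv hv'
  · by_cases hvw : v = w
    · subst hvw
      exact share e he e' he' hne v hv hw
    · by_cases hwe : w ∈ e
      · exact share e he e' he' hne w hwe hw
      · intro hkk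
        have hf' : f = s(v, w) := (Sym2.mem_and_mem_iff hvw).1 ⟨hvf, hwf⟩
        subst hf'
        obtain ⟨x, rfl⟩ := Sym2.mem_iff_exists.1 hv
        have hxw : x ≠ w := by rintro rfl; exact hwe (by simp)
        refine h.ind v x w (by simp) (by simp) (by simp) he hf hxw (k s(v, x))
          (hk _ he v (by simp)) (hk _ he x (by simp)) ?_
        rw [hkk]
        exact hk _ he' w hw

lemma mad_bound {G : SimpleGraph V} (hmad : mad G < 3) (A : Finset V) (hA : A.Nonempty) :
    2 * {e ∈ G.edgeSet | ∀ v ∈ e, v ∈ A}.ncard < 3 * A.card := by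
  have hb : BddAbove {x : ℝ | ∃ A : Finset V, A.Nonempty ∧
      x = 2 * ({e ∈ G.edgeSet | ∀ v ∈ e, v ∈ A}.ncard : ℝ) / (A.card : ℝ)} := by
    apply Set.Finite.bddAbove
    apply (Set.finite_range (fun A : Finset V =>
      2 * ({e ∈ G.edgeSet | ∀ v ∈ e, v ∈ A}.ncard : ℝ) / (A.card : ℝ))).subset
    rintro x ⟨A, -, rfl⟩
    exact ⟨A, rfl⟩
  have h1 := lt_of_le_of_lt (le_csSup hb ⟨A, hA, rfl⟩) hmad
  have h2 : (0 : ℝ) < A.card := by exact_mod_cast hA.card_pos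
  rw [div_lt_iff₀ h2] at h1
  exact_mod_cast h1


end Helpers

/-- If `Δ ≥ 7` and `G` has maximum average degree less than `3` and maximum degree at
most `Δ`, then `χ'_s(G) ≤ 3Δ`. -/
theorem strong_chromatic_index_mad_lt_three {V : Type*} [Fintype V] (Δ : ℕ)
    (hΔ : 7 ≤ Δ) (G : SimpleGraph V) (hmad : mad G < 3) (hdeg : G.maxDegree ≤ Δ) :
    strongChromaticIndex G ≤ 3 * Δ := by
  have hd : ∀ v, dg G v ≤ Δ := fun v => by
    rw [dg_eq_degree]
    refine le_trans (le_of_eq ?_) ((G.degree_le_maxDegree v).trans hdeg)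
    congr!
  apply Nat.sInf_le
  by_contra hno
  obtain ⟨H, hHG, hM⟩ := exists_minCE hΔ hd (fun C h => hno (h.strong (by omega)))
  obtain ⟨A, hA, h1, h2⟩ := hM.dense
  have h3 := mad_bound hmad A hA
  have h4 : H.edgeSet ⊆ {e ∈ G.edgeSet | ∀ v ∈ e, v ∈ A} := fun e he =>
    ⟨SimpleGraph.edgeSet_mono hHG he, h1 e he⟩
  have h5 := Set.ncard_le_ncard h4 (Set.toFinite _)
  omega

end StrongEC
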